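/- arXiv:1309.3444 — 2 statements merged into one kernel-verified Lean document; each statement's English description precedes it below -/
import Mathlib

section
/- There are positive constants a₃ and κ₃, independent of R and V, such that for every positive integer R and every subset V of ℤ² containing (0,0) and (R,0), the simple random walk on the comb started at the origin satisfies P_0( H({(R,0)}) < H(Vᶜ) ) ≤ exp( a₃ − κ₃·√(R³/|V|) ). -/
open MeasureTheory ENNReal
open scoped Pointwise

/-- Adjacency in the comb lattice `𝒞`. -/
def combAdj (z w : ℤ × ℤ) : Prop :=
  (z.1 = w.1 ∧ |z.2 - w.2| = 1) ∨ (z.2 = 0 ∧ w.2 = 0 ∧ |z.1 - w.1| = 1)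

/-- Degree of a vertex in the comb. -/
def combDeg (z : ℤ × ℤ) : ℕ := if z.2 = 0 then 4 else 2

open Classical in
/-- One-step transition probability of the simple random walk on the comb. -/
noncomputable def stepProb (z w : ℤ × ℤ) : ℝ≥0∞ :=
  if combAdj z w then ((combDeg z : ℝ≥0∞))⁻¹ else 0

/-- Probability that the walk started at `v` follows the given finite path. -/
noncomputable def pathProb (v : ℤ × ℤ) {n : ℕ} (path : Fin (n + 1) → ℤ × ℤ) : ℝ≥0∞ :=
  (if path 0 = v then 1 else 0) * ∏ i : Fin n, stepProb (path i.castSucc) (path i.succ)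

/-- `S` is a simple random walk on the comb started at `v`, under the probability
measure `P` (characterized by its finite-dimensional distributions). -/
def IsCombWalk {Ω : Type*} [MeasurableSpace Ω] (P : Measure Ω)
    (S : ℕ → Ω → ℤ × ℤ) (v : ℤ × ℤ) : Prop :=
  IsProbabilityMeasure P ∧ (∀ t, Measurable (S t)) ∧
    ∀ (n : ℕ) (path : Fin (n + 1) → ℤ × ℤ),
      P {ω | ∀ i : Fin (n + 1), S i ω = path i} = pathProb v path

/-- `W i`, `i : ℕ`, are i.i.d. simple random walks on the comb started at the origin. -/
def IsIIDCombWalks {Ω : Type*} [MeasurableSpace Ω] (P : Measure Ω)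
    (W : ℕ → ℕ → Ω → ℤ × ℤ) : Prop :=
  IsProbabilityMeasure P ∧ (∀ i t, Measurable (W i t)) ∧
    ∀ (k n : ℕ) (path : Fin k → Fin (n + 1) → ℤ × ℤ),
      P {ω | ∀ i : Fin k, ∀ t : Fin (n + 1), W i t ω = path i t} =
        ∏ i : Fin k, pathProb (0, 0) (path i)

/-- The domain `𝒟(ρ) = D(ρ) ∩ ℤ²`. -/
def combD (ρ : ℝ) : Set (ℤ × ℤ) :=
  {z | |(z.1 : ℝ)| < ρ ∧ |(z.2 : ℝ)| < (ρ - |(z.1 : ℝ)|) ^ 2 / 3}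

/-- The boundary `∂𝒟(ρ)`: sites outside `𝒟(ρ)` at graph distance 1 from `𝒟(ρ)`. -/
def combBoundary (ρ : ℝ) : Set (ℤ × ℤ) :=
  {z | z ∉ combD ρ ∧ ∃ w ∈ combD ρ, combAdj w z}

/-- Hitting time of a set by a trajectory (`⊤` if the set is never hit). -/
noncomputable def hitTime (Λ : Set (ℤ × ℤ)) (traj : ℕ → ℤ × ℤ) : ℕ∞ :=
  ⨅ (m : ℕ) (_ : traj m ∈ Λ), (m : ℕ∞)

/-- The trajectory exits `D` for the first time at the site `z`. -/
def exitsAt (D : Set (ℤ × ℤ)) (z : ℤ × ℤ) (traj : ℕ → ℤ × ℤ) : Prop :=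
  ∃ n : ℕ, (∀ m < n, traj m ∈ D) ∧ traj n ∉ D ∧ traj n = z

/-- Green's function of the walk `S` killed upon exiting `Λ`:
expected number of visits to `y` strictly before the exit time. -/
noncomputable def greenFn {Ω : Type*} [MeasurableSpace Ω] (P : Measure Ω)
    (S : ℕ → Ω → ℤ × ℤ) (Λ : Set (ℤ × ℤ)) (y : ℤ × ℤ) : ℝ≥0∞ :=
  ∑' n : ℕ, P {ω | (∀ m ≤ n, S m ω ∈ Λ) ∧ S n ω = y}

/-- The parent `𝒜(z)` of a vertex of the comb: its unique neighbor closer to the origin. -/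
def parent (z : ℤ × ℤ) : ℤ × ℤ :=
  if z.2 = 0 then (z.1 - Int.sign z.1, 0) else (z.1, z.2 - Int.sign z.2)

/-- First site outside `A` visited by the trajectory: the settlement site of an explorer. -/
noncomputable def settlePoint (A : Set (ℤ × ℤ)) (traj : ℕ → ℤ × ℤ) : ℤ × ℤ :=
  traj (sInf {n | traj n ∉ A})

/-- The internal DLA cluster after `k` explorers with trajectories `W 0, …, W (k-1)`. -/
noncomputable def dlaCluster (W : ℕ → ℕ → ℤ × ℤ) : ℕ → Set (ℤ × ℤ)
  | 0 => ∅
  | k + 1 => dlaCluster W k ∪ {settlePoint (dlaCluster W k) (W k)}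

open Classical in
/-- Toppling at `x` for the divisible sandpile: the mass exceeding 1 at `x`
is distributed equally among the neighbors of `x` in the comb. -/
noncomputable def topple (x : ℤ × ℤ) (μ : ℤ × ℤ → ℝ) : ℤ × ℤ → ℝ := fun z =>
  if μ x ≤ 1 then μ z
  else if z = x then 1
  else if combAdj x z then μ z + (μ x - 1) / (combDeg x : ℝ)
  else μ z

/-- Mass distribution of the divisible sandpile started with mass `mass` at the
origin, after `k` topplings along the sequence `seq`. -/
noncomputable def sandMass (seq : ℕ → ℤ × ℤ) (mass : ℝ) : ℕ → ℤ × ℤ → ℝ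
  | 0 => fun z => if z = (0, 0) then mass else 0
  | k + 1 => topple (seq k) (sandMass seq mass k)

/-- The odometer of the divisible sandpile: total mass emitted from `z`. -/
noncomputable def odometer (seq : ℕ → ℤ × ℤ) (mass : ℝ) (z : ℤ × ℤ) : ℝ :=
  ∑' k : ℕ, if seq k = z then max (sandMass seq mass k z - 1) 0 else 0

/-- The divisible sandpile cluster: sites which emitted positive mass. -/
def sandCluster (seq : ℕ → ℤ × ℤ) (mass : ℝ) : Set (ℤ × ℤ) :=
  {z | 0 < odometer seq mass z}

/-- Euclidean ball `𝔹(R)` of radius `R` in `ℤ²`. -/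
def ballZ (R : ℝ) : Set (ℤ × ℤ) :=
  {z | Real.sqrt ((z.1 : ℝ) ^ 2 + (z.2 : ℝ) ^ 2) < R}

/-- Smallest integer `≥ (ρ - x)²/3`. -/
noncomputable def Lrho (ρ : ℝ) (x : ℤ) : ℕ := ⌈(ρ - (x : ℝ)) ^ 2 / 3⌉₊

/-- Smallest integer `≥ (ρ - |x|)²/3`. -/
noncomputable def LrhoAbs (ρ : ℝ) (x : ℤ) : ℕ := ⌈(ρ - |(x : ℝ)|) ^ 2 / 3⌉₊

/-!
The crossing probability is bounded by a superharmonic barrier `G(x, y) = g(x) φₓ(y)`. Let `hₓ` be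
the height of the lowest site of the upper tooth at `x` that is missing from `V`. On that tooth `φₓ`
decreases linearly with slope `eₓ ≤ 1 / hₓ`, so that along the spine the tooth acts as a killing of
rate `eₓ`: it suffices that `g (x - 1) + g (x + 1) ≤ (2 + eₓ) g x`. If `eₓ ≤ δ²`, this is achieved
by a product `g x = ∏ (1 + uᵢ)` whose slopes solve the damped recursion
`uₙ₊₁ = (1 - δ) uₙ + eₙ₊₁`; they sum to about `δ⁻¹ ∑ eₓ`, so `g R` is exponentially large in
`δ⁻¹ ∑ eₓ`. The choice `δ² = R / |V|` and `eₓ = 1 / (hₓ + |V| / R)` together with `∑ hₓ ≤ |V|` and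
the Cauchy–Schwarz inequality yields `δ⁻¹ ∑ eₓ ≥ √(R³ / |V|) / 2`.
The requirement `δ ≤ 1`, that is `R ≤ |V|`, is harmless: if a site of the spine between the two
endpoints is missing from `V`, the crossing is impossible.
-/

section FirstPassage

variable {V A B : Set (ℤ × ℤ)} {n : ℕ} {z : ℤ × ℤ}

lemma exists_first_hit_of_hitTime_lt {traj : ℕ → ℤ × ℤ} (h : hitTime A traj < hitTime B traj) :
    ∃ n, (∀ m < n, traj m ∉ B ∧ traj m ∉ A) ∧ traj n ∈ A := by
  classical
  obtain ⟨k, hkA, hkB⟩ : ∃ k, traj k ∈ A ∧ (k : ℕ∞) < hitTime B traj := by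
    rw [hitTime] at h
    simpa only [iInf_lt_iff, exists_prop] using h
  have hA : ∃ n, traj n ∈ A := ⟨k, hkA⟩
  refine ⟨Nat.find hA, fun m hm => ⟨fun hmB => ?_, Nat.find_min hA hm⟩, Nat.find_spec hA⟩
  have hmk : m < k := hm.trans_le (Nat.find_min' hA hkA)
  exact (hkB.trans_le (iInf₂_le m hmB)).not_gt (mod_cast hmk)

lemma pathProb_of_ne {path : Fin (n + 1) → ℤ × ℤ} (h : path 0 ≠ z) : pathProb z path = 0 := by
  simp [pathProb, h]

lemma pathProb_cons_self (path : Fin (n + 1) → ℤ × ℤ) :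
    pathProb z (Fin.cons z path : Fin (n + 2) → ℤ × ℤ) =
      ∑' w, stepProb z w * pathProb w path := by
  rw [tsum_eq_single (path 0) fun w hw => by rw [pathProb_of_ne hw.symm, mul_zero]]
  simp only [pathProb, Fin.prod_univ_succ, Fin.castSucc_zero, Fin.cons_zero, ← Fin.succ_castSucc,
    Fin.cons_succ, if_true, one_mul]

/-- The paths of length `n` that end in `A` and stay in `V \ A` before their last site. -/
def firstPassagePaths (V A : Set (ℤ × ℤ)) (n : ℕ) : Set (Fin (n + 1) → ℤ × ℤ) :=
  {path | (∀ i : Fin n, path i.castSucc ∈ V \ A) ∧ path (Fin.last n) ∈ A}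

lemma cons_mem_firstPassagePaths {path : Fin (n + 1) → ℤ × ℤ} :
    (Fin.cons z path : Fin (n + 2) → ℤ × ℤ) ∈ firstPassagePaths V A (n + 1) ↔
      z ∈ V \ A ∧ path ∈ firstPassagePaths V A n := by
  simp only [firstPassagePaths, Set.mem_ofPred_eq, Fin.forall_fin_succ (n := n),
    Fin.castSucc_zero, Fin.cons_zero, ← Fin.succ_castSucc, Fin.cons_succ, ← Fin.succ_last,
    and_assoc]

/-- The probability that the walk started at `z` first hits `A` at time `n`, without having left
`V` before. -/
noncomputable def firstPassageProb (V A : Set (ℤ × ℤ)) (n : ℕ) (z : ℤ × ℤ) : ℝ≥0∞ :=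
  ∑' path : firstPassagePaths V A n, pathProb z path.1

lemma firstPassageProb_zero : firstPassageProb V A 0 z = A.indicator 1 z := by
  rw [firstPassageProb, tsum_subtype (firstPassagePaths V A 0) (pathProb z),
    tsum_eq_single fun _ => z]
  · by_cases hz : z ∈ A <;> simp [Set.indicator, firstPassagePaths, pathProb, hz]
  · intro path hpath
    have h₀ : path 0 ≠ z := fun h => hpath (funext fun i => by rw [Fin.fin_one_eq_zero i, h])
    simp [Set.indicator, pathProb_of_ne h₀]

lemma tsum_fin_succ_pi {α : Type*} (F : (Fin (n + 1) → α) → ℝ≥0∞) :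
    ∑' f, F f = ∑' (a) (f : Fin n → α), F (Fin.cons a f) := by
  rw [← (Fin.consEquiv fun _ : Fin (n + 1) => α).tsum_eq]
  exact ENNReal.tsum_prod (f := fun a f => F (Fin.cons a f))

lemma firstPassageProb_succ :
    firstPassageProb V A (n + 1) z =
      (V \ A).indicator (fun z => ∑' w, stepProb z w * firstPassageProb V A n w) z := by
  rw [firstPassageProb, tsum_subtype (firstPassagePaths V A (n + 1)) (pathProb z),
    tsum_fin_succ_pi, tsum_eq_single z]
  · by_cases hz : z ∈ V \ A
    · simp only [Set.indicator_of_mem hz, firstPassageProb, tsum_subtype (firstPassagePaths V A n),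
        ← ENNReal.tsum_mul_left]
      rw [ENNReal.tsum_comm]
      refine tsum_congr fun path => ?_
      by_cases hpath : path ∈ firstPassagePaths V A n <;>
        simp [Set.indicator, cons_mem_firstPassagePaths, pathProb_cons_self, hz.1, hz.2, hpath]
    · simp [Set.indicator, cons_mem_firstPassagePaths, hz]
  · intro w hw
    have h₀ (path : Fin (n + 1) → ℤ × ℤ) :
        pathProb z (Fin.cons w path : Fin (n + 2) → ℤ × ℤ) = 0 := pathProb_of_ne hw
    simp [Set.indicator, h₀]

/-- `G` is superharmonic on `D` for the simple random walk on the comb. -/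
def IsCombSuperharmonicOn (G : ℤ × ℤ → ℝ≥0∞) (D : Set (ℤ × ℤ)) : Prop :=
  ∀ z ∈ D, ∑' w, stepProb z w * G w ≤ G z

variable {G : ℤ × ℤ → ℝ≥0∞} {c : ℝ≥0∞}

lemma IsCombSuperharmonicOn.mul_sum_firstPassageProb_le (hG : IsCombSuperharmonicOn G (V \ A))
    (hc : ∀ z ∈ A, c ≤ G z) (N : ℕ) (z : ℤ × ℤ) :
    c * ∑ n ∈ Finset.range N, firstPassageProb V A n z ≤ G z := by
  induction N generalizing z with
  | zero => simp
  | succ N ih =>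
    simp only [Finset.sum_range_succ', firstPassageProb_succ, firstPassageProb_zero]
    by_cases hzA : z ∈ A
    · simpa [hzA] using hc z hzA
    by_cases hzV : z ∈ V
    · simp only [Set.indicator_of_mem (show z ∈ V \ A from ⟨hzV, hzA⟩),
        Set.indicator_of_notMem hzA, add_zero]
      calc c * ∑ n ∈ Finset.range N, ∑' w, stepProb z w * firstPassageProb V A n w
          = ∑' w, stepProb z w * (c * ∑ n ∈ Finset.range N, firstPassageProb V A n w) := by
            simp only [← Summable.tsum_finsetSum fun _ _ => ENNReal.summable, ← Finset.mul_sum,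
              ← ENNReal.tsum_mul_left, mul_left_comm]
        _ ≤ ∑' w, stepProb z w * G w := by gcongr with w; exact ih w
        _ ≤ G z := hG z ⟨hzV, hzA⟩
    · simp [hzA, hzV]

variable {Ω : Type*} [MeasurableSpace Ω] {P : Measure Ω} {S : ℕ → Ω → ℤ × ℤ} {v : ℤ × ℤ}

lemma IsCombWalk.measure_hitTime_lt_le_tsum (hS : IsCombWalk P S v) :
    P {ω | hitTime A (fun t => S t ω) < hitTime Vᶜ (fun t => S t ω)} ≤
      ∑' n, firstPassageProb V A n v := by
  have hsub : {ω | hitTime A (fun t => S t ω) < hitTime Vᶜ (fun t => S t ω)} ⊆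
      ⋃ n, ⋃ path ∈ firstPassagePaths V A n, {ω | ∀ i : Fin (n + 1), S i ω = path i} := by
    intro ω hω
    obtain ⟨n, hlt, hn⟩ := exists_first_hit_of_hitTime_lt hω
    simp only [Set.mem_iUnion]
    exact ⟨n, fun i => S i ω,
      ⟨fun i => ⟨not_not.mp (hlt i i.2).1, (hlt i i.2).2⟩, hn⟩, fun _ => rfl⟩
  refine (measure_mono hsub).trans ((measure_iUnion_le _).trans (ENNReal.tsum_le_tsum fun n => ?_))
  refine (measure_biUnion_le P (Set.to_countable _) _).trans_eq (tsum_congr fun path => ?_)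
  exact hS.2.2 n path

theorem IsCombWalk.mul_measure_hitTime_lt_le (hS : IsCombWalk P S v)
    (hG : IsCombSuperharmonicOn G (V \ A)) (hc : ∀ z ∈ A, c ≤ G z) :
    c * P {ω | hitTime A (fun t => S t ω) < hitTime Vᶜ (fun t => S t ω)} ≤ G v := by
  refine (mul_le_mul_right hS.measure_hitTime_lt_le_tsum c).trans ?_
  rw [ENNReal.tsum_eq_iSup_nat, ENNReal.mul_iSup]
  exact iSup_le fun N => hG.mul_sum_firstPassageProb_le hc N v

end FirstPassage

section Superharmonic

lemma combAdj_spine_iff {x : ℤ} {w : ℤ × ℤ} :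
    combAdj (x, 0) w ↔ w ∈ ({(x - 1, 0), (x + 1, 0), (x, -1), (x, 1)} : Finset (ℤ × ℤ)) := by
  obtain ⟨a, b⟩ := w
  simp only [combAdj, Finset.mem_insert, Finset.mem_singleton, Prod.mk.injEq,
    abs_eq (zero_le_one' ℤ), true_and]
  omega

lemma combAdj_tooth_iff {x y : ℤ} (hy : y ≠ 0) {w : ℤ × ℤ} :
    combAdj (x, y) w ↔ w ∈ ({(x, y - 1), (x, y + 1)} : Finset (ℤ × ℤ)) := by
  obtain ⟨a, b⟩ := w
  simp only [combAdj, Finset.mem_insert, Finset.mem_singleton, Prod.mk.injEq,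
    abs_eq (zero_le_one' ℤ)]
  omega

lemma tsum_stepProb_mul_ofReal {z : ℤ × ℤ} {neighbors : Finset (ℤ × ℤ)}
    (hadj : ∀ {w}, combAdj z w ↔ w ∈ neighbors) {G : ℤ × ℤ → ℝ} (hG : ∀ z, 0 ≤ G z) :
    ∑' w, stepProb z w * ENNReal.ofReal (G w) =
      ENNReal.ofReal ((∑ w ∈ neighbors, G w) / combDeg z) := by
  have hdeg : (0 : ℝ) < combDeg z := by unfold combDeg; split_ifs <;> norm_num
  rw [tsum_eq_sum (s := neighbors) fun w hw => by simp [stepProb, hadj, hw],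
    ENNReal.ofReal_div_of_pos hdeg, ENNReal.ofReal_natCast,
    ENNReal.ofReal_sum_of_nonneg fun w _ => hG w, ENNReal.div_eq_inv_mul, Finset.mul_sum]
  exact Finset.sum_congr rfl fun w hw => by rw [stepProb, if_pos (hadj.mpr hw)]

lemma isCombSuperharmonicOn_ofReal {G : ℤ × ℤ → ℝ} {D : Set (ℤ × ℤ)} (hG : ∀ z, 0 ≤ G z)
    (spine : ∀ x, (x, 0) ∈ D →
      G (x - 1, 0) + G (x + 1, 0) + (G (x, -1) + G (x, 1)) ≤ 4 * G (x, 0))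
    (tooth : ∀ x y, y ≠ 0 → (x, y) ∈ D → G (x, y - 1) + G (x, y + 1) ≤ 2 * G (x, y)) :
    IsCombSuperharmonicOn (fun z => ENNReal.ofReal (G z)) D := by
  rintro ⟨x, y⟩ hz
  by_cases hy : y = 0
  · subst hy
    rw [tsum_stepProb_mul_ofReal combAdj_spine_iff hG]
    refine ENNReal.ofReal_le_ofReal ?_
    rw [div_le_iff₀' (by simp [combDeg]), Finset.sum_insert (by grind),
      Finset.sum_insert (by grind), Finset.sum_pair (by grind), ← add_assoc]
    simpa [combDeg] using spine x hz
  · rw [tsum_stepProb_mul_ofReal (combAdj_tooth_iff hy) hG]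
    refine ENNReal.ofReal_le_ofReal ?_
    rw [div_le_iff₀' (by simp [combDeg, hy]), Finset.sum_pair (by grind)]
    simpa [combDeg, hy] using tooth x y hy hz

variable {Ω : Type*} [MeasurableSpace Ω] {P : Measure Ω} {S : ℕ → Ω → ℤ × ℤ} {v : ℤ × ℤ}

lemma IsCombWalk.measure_hitTime_lt_eq_zero_of_spine_notMem (hS : IsCombWalk P S v)
    {V A : Set (ℤ × ℤ)} {x : ℤ} (hx : (x, 0) ∉ V) (hv : v.1 ≤ x) (hA : ∀ z ∈ A, x < z.1) :
    P {ω | hitTime A (fun t => S t ω) < hitTime Vᶜ (fun t => S t ω)} = 0 := by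
  let G : ℤ × ℤ → ℝ := fun z => if x < z.1 then 1 else 0
  have hG : IsCombSuperharmonicOn (fun z => ENNReal.ofReal (G z)) (V \ A) := by
    refine isCombSuperharmonicOn_ofReal (fun z => by positivity) (fun a ha => ?_)
      fun a y _ _ => by simp only [G]; linarith
    have hax : a ≠ x := fun h => hx (h ▸ ha.1)
    simp only [G]
    split_ifs <;> first | omega | norm_num
  have h := hS.mul_measure_hitTime_lt_le (c := 1) hG fun z hz => by simp [G, hA z hz]
  simpa [G, hv.not_gt] using h

end Superharmonic

section SpineProfile

/-- The slopes `uₙ` of the spine profile, for the damping `δ` and the killing rates `e`. -/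
noncomputable def dampedSlope (δ : ℝ) (e : ℤ → ℝ) : ℕ → ℝ
  | 0 => 0
  | n + 1 => (1 - δ) * dampedSlope δ e n + e (n + 1)

/-- The factor of the barrier that depends on the position along the spine; it is `1` on the
nonpositive half of the comb and grows by the factor `1 + uₓ` from `x` to `x + 1`. -/
noncomputable def spineProfile (δ : ℝ) (e : ℤ → ℝ) (x : ℤ) : ℝ :=
  ∏ i ∈ Finset.range x.toNat, (1 + dampedSlope δ e i)

variable {δ : ℝ} {e : ℤ → ℝ}

lemma dampedSlope_nonneg (hδ : δ ≤ 1) (he : ∀ x, 0 ≤ e x) (n : ℕ) : 0 ≤ dampedSlope δ e n := by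
  induction n with
  | zero => rfl
  | succ n ih => exact add_nonneg (mul_nonneg (sub_nonneg.mpr hδ) ih) (he _)

lemma dampedSlope_le (hδ₀ : 0 ≤ δ) (hδ₁ : δ ≤ 1) (he : ∀ x, e x ≤ δ ^ 2) (n : ℕ) :
    dampedSlope δ e n ≤ δ := by
  induction n with
  | zero => exact hδ₀
  | succ n ih =>
    calc (1 - δ) * dampedSlope δ e n + e (n + 1)
        ≤ (1 - δ) * δ + δ ^ 2 :=
          add_le_add (mul_le_mul_of_nonneg_left ih (sub_nonneg.mpr hδ₁)) (he _)
      _ = δ := by ring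

lemma mul_sum_dampedSlope (δ : ℝ) (e : ℤ → ℝ) (n : ℕ) :
    δ * ∑ i ∈ Finset.range n, dampedSlope δ e i =
      ∑ i ∈ Finset.range n, e (i + 1) - dampedSlope δ e n := by
  induction n with
  | zero => simp [dampedSlope]
  | succ n ih =>
    rw [Finset.sum_range_succ, Finset.sum_range_succ, mul_add, ih, dampedSlope]
    ring

lemma spineProfile_of_le_one {x : ℤ} (hx : x ≤ 1) : spineProfile δ e x = 1 := by
  refine Finset.prod_eq_one fun i hi => ?_
  obtain rfl : i = 0 := by have := Finset.mem_range.mp hi; omega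
  simp [dampedSlope]

lemma spineProfile_natCast_add_one (n : ℕ) :
    spineProfile δ e (n + 1) = spineProfile δ e n * (1 + dampedSlope δ e n) := by
  rw [spineProfile, spineProfile, Int.toNat_natCast_add_one, Int.toNat_natCast,
    Finset.prod_range_succ]

lemma spineProfile_pos (hδ : δ ≤ 1) (he : ∀ x, 0 ≤ e x) (x : ℤ) : 0 < spineProfile δ e x :=
  Finset.prod_pos fun i _ => by linarith [dampedSlope_nonneg hδ he i]

lemma spineProfile_sub_one_add_add_one_le (hδ₀ : 0 ≤ δ) (hδ₁ : δ ≤ 1) (he₀ : ∀ x, 0 ≤ e x)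
    (he : ∀ x, e x ≤ δ ^ 2) (x : ℤ) :
    spineProfile δ e (x - 1) + spineProfile δ e (x + 1) ≤ (2 + e x) * spineProfile δ e x := by
  rcases le_or_gt x 0 with hx | hx
  · rw [spineProfile_of_le_one (by omega), spineProfile_of_le_one (by omega),
      spineProfile_of_le_one (by omega)]
    linarith [he₀ x]
  · obtain ⟨n, rfl⟩ : ∃ n : ℕ, x = n + 1 := ⟨(x - 1).toNat, by omega⟩
    have hg := spineProfile_pos hδ₁ he₀ (e := e) n
    have hu := dampedSlope_nonneg hδ₁ he₀ n
    have hquad : dampedSlope δ e n ^ 2 ≤ δ * dampedSlope δ e n := by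
      rw [sq]
      exact mul_le_mul_of_nonneg_right (dampedSlope_le hδ₀ hδ₁ he n) hu
    have hslope : 1 + (1 + dampedSlope δ e n) * (1 + dampedSlope δ e (n + 1)) ≤
        (2 + e (n + 1)) * (1 + dampedSlope δ e n) := by
      rw [dampedSlope]
      nlinarith
    have hnext := spineProfile_natCast_add_one (δ := δ) (e := e) (n + 1)
    push_cast at hnext
    rw [add_sub_cancel_right, hnext, spineProfile_natCast_add_one]
    linarith [mul_le_mul_of_nonneg_left hslope hg.le]

lemma exp_half_le_one_add {u : ℝ} (hu₀ : 0 ≤ u) (hu₁ : u ≤ 1) : Real.exp (u / 2) ≤ 1 + u := by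
  refine (Real.exp_bound_div_one_sub_of_interval (by linarith) (by linarith)).trans ?_
  rw [div_le_iff₀ (by linarith)]
  nlinarith

lemma exp_sum_div_sub_one_le_spineProfile (hδ₀ : 0 < δ) (hδ₁ : δ ≤ 1) (he₀ : ∀ x, 0 ≤ e x)
    (he : ∀ x, e x ≤ δ ^ 2) (n : ℕ) :
    Real.exp (((∑ i ∈ Finset.range n, e (i + 1)) / δ - 1) / 2) ≤ spineProfile δ e n := by
  have hslope_nonneg := dampedSlope_nonneg hδ₁ he₀
  have hslope_le := dampedSlope_le hδ₀.le hδ₁ he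
  have hsum : (∑ i ∈ Finset.range n, e (i + 1)) / δ - 1 ≤
      ∑ i ∈ Finset.range n, dampedSlope δ e i := by
    rw [sub_le_iff_le_add, div_le_iff₀ hδ₀]
    linarith [mul_sum_dampedSlope δ e n, hslope_le n]
  calc Real.exp (((∑ i ∈ Finset.range n, e (i + 1)) / δ - 1) / 2)
      ≤ Real.exp (∑ i ∈ Finset.range n, dampedSlope δ e i / 2) := by
        rw [← Finset.sum_div]
        gcongr
    _ = ∏ i ∈ Finset.range n, Real.exp (dampedSlope δ e i / 2) := Real.exp_sum _ _
    _ ≤ spineProfile δ e n := Finset.prod_le_prod (fun _ _ => (Real.exp_pos _).le) fun i _ =>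
        exp_half_le_one_add (hslope_nonneg i) ((hslope_le i).trans hδ₁)

end SpineProfile

section ToothProfile

/-- The factor of the barrier that depends on the position `y` on a tooth: it has slope `-ε` above
the spine, is constant below it, and is cut off to `0` from height `h` on. -/
noncomputable def toothProfile (ε : ℝ) (h : ℕ) (y : ℤ) : ℝ :=
  if y < h then 1 - ε * max (y : ℝ) 0 else 0

variable {ε : ℝ} {h : ℕ}

lemma toothProfile_of_lt {y : ℤ} (hy : y < h) : toothProfile ε h y = 1 - ε * max (y : ℝ) 0 :=
  if_pos hy

lemma toothProfile_of_le {y : ℤ} (hy : h ≤ y) : toothProfile ε h y = 0 :=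
  if_neg hy.not_gt

lemma toothProfile_zero (hh : 0 < h) : toothProfile ε h 0 = 1 := by
  simp [toothProfile, hh]

lemma mul_max_zero_le_one (hε : 0 ≤ ε) (hεh : ε * h ≤ 1) {y : ℤ} (hy : y ≤ h) :
    ε * max (y : ℝ) 0 ≤ 1 :=
  (mul_le_mul_of_nonneg_left (max_le (mod_cast hy) h.cast_nonneg) hε).trans hεh

lemma toothProfile_nonneg (hε : 0 ≤ ε) (hεh : ε * h ≤ 1) (y : ℤ) : 0 ≤ toothProfile ε h y := by
  rcases lt_or_ge y h with hy | hy
  · rw [toothProfile_of_lt hy]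
    exact sub_nonneg.mpr (mul_max_zero_le_one hε hεh hy.le)
  · rw [toothProfile_of_le hy]

lemma toothProfile_le_one (hε : 0 ≤ ε) (y : ℤ) : toothProfile ε h y ≤ 1 := by
  rcases lt_or_ge y h with hy | hy
  · rw [toothProfile_of_lt hy]
    exact sub_le_self _ (by positivity)
  · rw [toothProfile_of_le hy]
    exact zero_le_one

lemma toothProfile_le (hε : 0 ≤ ε) (hεh : ε * h ≤ 1) {y : ℤ} (hy : y ≤ h) :
    toothProfile ε h y ≤ 1 - ε * max (y : ℝ) 0 := by
  rcases hy.lt_or_eq with hlt | rfl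
  · exact (toothProfile_of_lt hlt).le
  · rw [toothProfile_of_le le_rfl]
    exact sub_nonneg.mpr (mul_max_zero_le_one hε hεh le_rfl)

lemma two_mul_max_zero_le (y : ℝ) : 2 * max y 0 ≤ max (y - 1) 0 + max (y + 1) 0 := by
  rcases max_cases y 0 with ⟨hmax, _⟩ | ⟨hmax, _⟩ <;> rw [hmax]
  · linarith [le_max_left (y - 1) 0, le_max_left (y + 1) 0]
  · linarith [le_max_right (y - 1) 0, le_max_right (y + 1) 0]

lemma toothProfile_sub_one_add_add_one_le (hε : 0 ≤ ε) (hεh : ε * h ≤ 1) {y : ℤ} (hy : y ≠ h) :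
    toothProfile ε h (y - 1) + toothProfile ε h (y + 1) ≤ 2 * toothProfile ε h y := by
  rcases hy.lt_or_gt with hlt | hgt
  · have hprev := toothProfile_le hε hεh (by omega : y - 1 ≤ h)
    have hnext := toothProfile_le hε hεh (by omega : y + 1 ≤ h)
    have hconvex := mul_le_mul_of_nonneg_left (two_mul_max_zero_le y) hε
    push_cast at hprev hnext
    rw [toothProfile_of_lt hlt]
    linarith
  · rw [toothProfile_of_le (by omega), toothProfile_of_le (by omega), toothProfile_of_le hgt.le]
    norm_num

end ToothProfile

section Barrier

/-- The barrier `g(x) φₓ(y)`, where `h x` is the height of a site of the tooth at `x` outside the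
domain of the walk. -/
noncomputable def combBarrier (δ : ℝ) (e : ℤ → ℝ) (h : ℤ → ℕ) (z : ℤ × ℤ) : ℝ :=
  spineProfile δ e z.1 * toothProfile (e z.1) (h z.1) z.2

variable {δ : ℝ} {e : ℤ → ℝ} {h : ℤ → ℕ} {V : Set (ℤ × ℤ)}

lemma combBarrier_nonneg (hδ : δ ≤ 1) (he₀ : ∀ x, 0 ≤ e x) (heh : ∀ x, e x * h x ≤ 1)
    (z : ℤ × ℤ) : 0 ≤ combBarrier δ e h z :=
  mul_nonneg (spineProfile_pos hδ he₀ _).le (toothProfile_nonneg (he₀ _) (heh _) _)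

lemma combBarrier_le_spineProfile (hδ : δ ≤ 1) (he₀ : ∀ x, 0 ≤ e x) (z : ℤ × ℤ) :
    combBarrier δ e h z ≤ spineProfile δ e z.1 :=
  mul_le_of_le_one_right (spineProfile_pos hδ he₀ _).le (toothProfile_le_one (he₀ _) _)

lemma combBarrier_spine {x : ℤ} (hx : 0 < h x) : combBarrier δ e h (x, 0) = spineProfile δ e x := by
  simp only [combBarrier, toothProfile_zero hx, mul_one]

lemma pos_of_spine_mem (hV : ∀ x, (x, (h x : ℤ)) ∉ V) {x : ℤ} (hx : (x, 0) ∈ V) : 0 < h x :=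
  Nat.pos_of_ne_zero fun h₀ => hV x (by simpa [h₀] using hx)

lemma isCombSuperharmonicOn_combBarrier (hδ₀ : 0 ≤ δ) (hδ₁ : δ ≤ 1) (he₀ : ∀ x, 0 ≤ e x)
    (he : ∀ x, e x ≤ δ ^ 2) (heh : ∀ x, e x * h x ≤ 1) (hV : ∀ x, (x, (h x : ℤ)) ∉ V) :
    IsCombSuperharmonicOn (fun z => ENNReal.ofReal (combBarrier δ e h z)) V := by
  refine isCombSuperharmonicOn_ofReal (combBarrier_nonneg hδ₁ he₀ heh) ?_ ?_
  · intro x hx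
    have hhx : 0 < h x := pos_of_spine_mem hV hx
    have hg : 0 ≤ spineProfile δ e x := (spineProfile_pos hδ₁ he₀ x).le
    have hlower : combBarrier δ e h (x, -1) ≤ spineProfile δ e x :=
      combBarrier_le_spineProfile hδ₁ he₀ _
    have hupper : combBarrier δ e h (x, 1) ≤ spineProfile δ e x * (1 - e x) :=
      mul_le_mul_of_nonneg_left
        (by simpa using toothProfile_le (he₀ x) (heh x) (mod_cast hhx : (1 : ℤ) ≤ h x)) hg
    have hleft : combBarrier δ e h (x - 1, 0) ≤ spineProfile δ e (x - 1) :=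
      combBarrier_le_spineProfile hδ₁ he₀ _
    have hright : combBarrier δ e h (x + 1, 0) ≤ spineProfile δ e (x + 1) :=
      combBarrier_le_spineProfile hδ₁ he₀ _
    rw [combBarrier_spine hhx]
    linarith [spineProfile_sub_one_add_add_one_le hδ₀ hδ₁ he₀ he x]
  · intro x y _ hxy
    have hy : y ≠ h x := fun hy => hV x (hy ▸ hxy)
    have htooth := mul_le_mul_of_nonneg_left
      (toothProfile_sub_one_add_add_one_le (he₀ x) (heh x) hy) (spineProfile_pos hδ₁ he₀ x).le
    simp only [combBarrier]
    linarith

theorem IsCombWalk.measure_hitTime_lt_le_exp {Ω : Type*} [MeasurableSpace Ω] {P : Measure Ω}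
    {S : ℕ → Ω → ℤ × ℤ} {v : ℤ × ℤ} (hS : IsCombWalk P S v) (hv : v.1 ≤ 1)
    (hδ₀ : 0 < δ) (hδ₁ : δ ≤ 1) (he₀ : ∀ x, 0 ≤ e x) (he : ∀ x, e x ≤ δ ^ 2)
    (heh : ∀ x, e x * h x ≤ 1) (hV : ∀ x, (x, (h x : ℤ)) ∉ V) {R : ℕ} (hR : ((R : ℤ), 0) ∈ V) :
    P {ω | hitTime {((R : ℤ), (0 : ℤ))} (fun t => S t ω) < hitTime Vᶜ (fun t => S t ω)} ≤
      ENNReal.ofReal (Real.exp ((1 - (∑ i ∈ Finset.range R, e (i + 1)) / δ) / 2)) := by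
  have hsuper := isCombSuperharmonicOn_combBarrier hδ₀.le hδ₁ he₀ he heh hV
  have hgrowth := exp_sum_div_sub_one_le_spineProfile hδ₀ hδ₁ he₀ he R
  set E := Real.exp (((∑ i ∈ Finset.range R, e (i + 1)) / δ - 1) / 2) with hE
  have hE₀ : 0 < E := Real.exp_pos _
  have hmul := hS.mul_measure_hitTime_lt_le (A := {((R : ℤ), 0)}) (c := ENNReal.ofReal E)
    (fun z hz => hsuper z hz.1) fun z hz => by
      rw [Set.mem_singleton_iff.mp hz, combBarrier_spine (pos_of_spine_mem hV hR)]
      exact ENNReal.ofReal_le_ofReal hgrowth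
  have hstart : combBarrier δ e h v ≤ 1 :=
    (combBarrier_le_spineProfile hδ₁ he₀ v).trans_eq (spineProfile_of_le_one hv)
  have hexp : Real.exp ((1 - (∑ i ∈ Finset.range R, e (i + 1)) / δ) / 2) = E⁻¹ := by
    rw [hE, ← Real.exp_neg]
    ring_nf
  rw [hexp, ENNReal.ofReal_inv_of_pos hE₀, ENNReal.le_inv_iff_mul_le, mul_comm]
  exact hmul.trans (ENNReal.ofReal_le_one.mpr hstart)

end Barrier

section ToothHeight

/-- The height of the lowest site of the upper half of the tooth at `x`, spine included, that is not
in `V`. It is `0` by convention if there is none. -/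
noncomputable def toothHeight (V : Set (ℤ × ℤ)) (x : ℤ) : ℕ :=
  sInf {n : ℕ | (x, (n : ℤ)) ∉ V}

variable {V : Set (ℤ × ℤ)}

lemma toothHeight_notMem (hV : V.Finite) (x : ℤ) : (x, (toothHeight V x : ℤ)) ∉ V := by
  have hinj : Function.Injective fun n : ℕ => (x, (n : ℤ)) := fun a b hab => by simpa using hab
  exact Nat.sInf_mem (s := {n : ℕ | (x, (n : ℤ)) ∉ V}) (by
    by_contra! hempty
    refine Set.infinite_of_injective_forall_mem hinj (fun n => ?_) hV
    by_contra hn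
    exact (Set.eq_empty_iff_forall_notMem.mp hempty n) hn)

lemma mem_of_lt_toothHeight {x : ℤ} {n : ℕ} (hn : n < toothHeight V x) : (x, (n : ℤ)) ∈ V :=
  not_not.mp (Nat.notMem_of_lt_sInf hn)

lemma sum_toothHeight_le_ncard (hV : V.Finite) {ι : Type*} (s : Finset ι) {x : ι → ℤ}
    (hx : Function.Injective x) : ∑ i ∈ s, toothHeight V (x i) ≤ V.ncard := by
  calc ∑ i ∈ s, toothHeight V (x i)
      = (s.sigma fun i => Finset.range (toothHeight V (x i))).card := by simp
    _ ≤ hV.toFinset.card := by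
      refine Finset.card_le_card_of_injOn (fun q : (_ : ι) × ℕ => (x q.1, (q.2 : ℤ))) ?_ ?_
      · rintro ⟨i, n⟩ hq
        simpa using mem_of_lt_toothHeight (Finset.mem_range.mp (Finset.mem_sigma.mp hq).2)
      · rintro ⟨i, m⟩ - ⟨j, n⟩ - hq
        simp only [Prod.mk.injEq, hx.eq_iff, Nat.cast_inj] at hq
        obtain ⟨rfl, rfl⟩ := hq
        rfl
    _ = V.ncard := (Set.ncard_eq_toFinset_card V hV).symm

lemma card_sq_div_le_sum_one_div_add {ι : Type*} (s : Finset ι) {a : ι → ℝ} (ha : ∀ i ∈ s, 0 ≤ a i)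
    {L : ℝ} (hL : 0 < L) :
    (s.card : ℝ) ^ 2 / (∑ i ∈ s, a i + s.card * L) ≤ ∑ i ∈ s, 1 / (a i + L) := by
  simpa [Finset.sum_add_distrib] using Finset.sq_sum_div_le_sum_sq_div s (fun _ => (1 : ℝ))
    (g := fun i => a i + L) fun i hi => add_pos_of_nonneg_of_pos (ha i hi) hL

lemma le_ncard_of_spine_mem (hV : V.Finite) {R : ℕ}
    (hspine : ∀ x : ℤ, 0 < x → x ≤ R → (x, 0) ∈ V) : R ≤ V.ncard := by
  have hsub : ↑(Finset.Ioc (0 : ℤ) R ×ˢ {(0 : ℤ)}) ⊆ V := by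
    rintro ⟨x, y⟩ hxy
    simp only [Finset.coe_product, Set.mem_prod, Finset.mem_coe, Finset.mem_Ioc,
      Finset.mem_singleton] at hxy
    obtain ⟨⟨hx₀, hxR⟩, rfl⟩ := hxy
    exact hspine x hx₀ hxR
  simpa only [Set.ncard_coe_finset, Finset.card_product, Int.card_Ioc, sub_zero, Int.toNat_natCast,
    Finset.card_singleton, mul_one] using Set.ncard_le_ncard hsub hV

end ToothHeight

section Crossing

variable {V : Set (ℤ × ℤ)} {Ω : Type*} [MeasurableSpace Ω] {P : Measure Ω} {S : ℕ → Ω → ℤ × ℤ}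
  {v : ℤ × ℤ} {R : ℕ}

theorem IsCombWalk.measure_hitTime_lt_le_exp_of_finite (hS : IsCombWalk P S v) (hv : v.1 ≤ 1)
    (hV : V.Finite) (hR : 0 < R) (hRV : ((R : ℤ), 0) ∈ V) {δ : ℝ} (hδ₀ : 0 < δ) (hδ₁ : δ ≤ 1) :
    P {ω | hitTime {((R : ℤ), (0 : ℤ))} (fun t => S t ω) < hitTime Vᶜ (fun t => S t ω)} ≤
      ENNReal.ofReal (Real.exp ((1 - δ * R ^ 2 / (δ ^ 2 * V.ncard + R)) / 2)) := by
  let e : ℤ → ℝ := fun x => 1 / (toothHeight V x + (δ ^ 2)⁻¹)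
  have he₀ (x : ℤ) : 0 ≤ e x := by positivity
  have he (x : ℤ) : e x ≤ δ ^ 2 := by
    simp only [e, one_div]
    exact inv_le_of_inv_le₀ (by positivity) (le_add_of_nonneg_left (by positivity))
  have heh (x : ℤ) : e x * toothHeight V x ≤ 1 := by
    rw [one_div_mul_eq_div, div_le_one (by positivity)]
    exact le_add_of_nonneg_right (by positivity)
  refine (hS.measure_hitTime_lt_le_exp hv hδ₀ hδ₁ he₀ he heh (toothHeight_notMem hV) hRV).trans ?_
  have hheight : ∑ i ∈ Finset.range R, (toothHeight V (i + 1) : ℝ) ≤ V.ncard :=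
    mod_cast sum_toothHeight_le_ncard hV (Finset.range R) (x := fun i => (i : ℤ) + 1)
      fun i j hij => by simpa using hij
  have hsum : δ * R ^ 2 / (δ ^ 2 * V.ncard + R) ≤ (∑ i ∈ Finset.range R, e (i + 1)) / δ := by
    rw [le_div_iff₀ hδ₀]
    calc δ * R ^ 2 / (δ ^ 2 * V.ncard + R) * δ
        = (R : ℝ) ^ 2 / (V.ncard + R * (δ ^ 2)⁻¹) := by field_simp
      _ ≤ (R : ℝ) ^ 2 / (∑ i ∈ Finset.range R, (toothHeight V (i + 1) : ℝ) + R * (δ ^ 2)⁻¹) := by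
        gcongr
      _ ≤ ∑ i ∈ Finset.range R, e (i + 1) := by
        simpa only [Finset.card_range] using card_sq_div_le_sum_one_div_add (Finset.range R)
          (a := fun i : ℕ => (toothHeight V (i + 1) : ℝ)) (fun i _ => Nat.cast_nonneg _)
          (inv_pos.mpr (pow_pos hδ₀ 2))
  gcongr

theorem IsCombWalk.measure_hitTime_lt_le_exp_sqrt (hS : IsCombWalk P S v) (hv : v.1 ≤ 1)
    (hV : V.Finite) (hR : 0 < R) (hRV : ((R : ℤ), 0) ∈ V) (hcard : R ≤ V.ncard) :
    P {ω | hitTime {((R : ℤ), (0 : ℤ))} (fun t => S t ω) < hitTime Vᶜ (fun t => S t ω)} ≤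
      ENNReal.ofReal (Real.exp (1 / 2 - 1 / 4 * Real.sqrt ((R : ℝ) ^ 3 / V.ncard))) := by
  have hR₀ : (0 : ℝ) < R := mod_cast hR
  have hN₀ : (0 : ℝ) < V.ncard := mod_cast hR.trans_le hcard
  set δ := Real.sqrt ((R : ℝ) / V.ncard)
  have hδ₀ : 0 < δ := Real.sqrt_pos.mpr (by positivity)
  have hδ₁ : δ ≤ 1 := Real.sqrt_le_one.mpr ((div_le_one hN₀).mpr (mod_cast hcard))
  have hδN : δ ^ 2 * V.ncard = R := by
    rw [Real.sq_sqrt (by positivity), div_mul_cancel₀ _ hN₀.ne']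
  have hsqrt : Real.sqrt ((R : ℝ) ^ 3 / V.ncard) = R * δ := by
    rw [show (R : ℝ) ^ 3 / V.ncard = R ^ 2 * (R / V.ncard) by ring, Real.sqrt_mul (by positivity),
      Real.sqrt_sq hR₀.le]
  convert hS.measure_hitTime_lt_le_exp_of_finite hv hV hR hRV hδ₀ hδ₁ using 3
  rw [hsqrt, hδN]
  field_simp
  ring

end Crossing

/-- **Lemma (crossing estimate).** There are positive constants `a₃`, `κ₃`,
independent of `R` and `V`, such that for `V ⊆ ℤ²` containing `(0,0)` and `(R,0)`,
`P₀(H((R,0)) < H(Vᶜ)) ≤ exp(a₃ − κ₃ √(R³/|V|))`. -/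
theorem comb_crossing_estimate :
    ∃ a₃ κ₃ : ℝ, 0 < a₃ ∧ 0 < κ₃ ∧
      ∀ R : ℕ, 0 < R → ∀ V : Set (ℤ × ℤ),
        ((0, 0) : ℤ × ℤ) ∈ V → (((R : ℤ), (0 : ℤ)) : ℤ × ℤ) ∈ V →
        ∀ (Ω : Type*) [MeasurableSpace Ω] (P : Measure Ω) (S : ℕ → Ω → ℤ × ℤ),
          IsCombWalk P S (0, 0) →
          P {ω | hitTime {(((R : ℤ), (0 : ℤ)) : ℤ × ℤ)} (fun t => S t ω) <
              hitTime Vᶜ (fun t => S t ω)} ≤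
            ENNReal.ofReal (Real.exp (a₃ - κ₃ * Real.sqrt ((R : ℝ) ^ 3 / (V.ncard : ℝ)))) := by
  refine ⟨1 / 2, 1 / 4, by norm_num, by norm_num, fun R hR V _ hRV Ω _ P S hS => ?_⟩
  have := hS.1
  by_cases hV : V.Finite
  · by_cases hspine : ∀ x : ℤ, 0 < x → x ≤ R → (x, 0) ∈ V
    · have hcard : R ≤ V.ncard := le_ncard_of_spine_mem hV hspine
      exact hS.measure_hitTime_lt_le_exp_sqrt zero_le_one hV hR hRV hcard
    · push Not at hspine
      obtain ⟨x, hx₀, hxR, hxV⟩ := hspine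
      have hxR' : x < R := hxR.lt_of_ne fun h => hxV (h ▸ hRV)
      rw [hS.measure_hitTime_lt_eq_zero_of_spine_notMem hxV hx₀.le (by simpa using hxR')]
      exact zero_le
  · rw [Set.Infinite.ncard hV]
    refine prob_le_one.trans (ENNReal.one_le_ofReal.mpr (Real.one_le_exp ?_))
    norm_num
end

section
/- There exist constants β>0 and κ₂>0 such that for all integers R and n with d(n) < β·R³, the internal DLA cluster on the comb satisfies P( (R,0) ∈ A(n) ) ≤ exp( −κ₂·R² ). -/
open MeasureTheory ENNReal
open scoped Pointwise

/-!
Fix `y < y'` on the positive axis and give a cluster the weight `2 ^ (e * b - a)`, where `a` and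
`b` are its numbers of sites to the right of `y` and of `y'`. As long as `a` is small, most teeth
beyond `y` are short, so some harmonic function on the comb, equal to `1` to the left of `y`, grows
to order `2 ^ e` before reaching `y'` and is at least `1 / 2` wherever the explorer can settle.
Optional stopping with this function shows that the weight is a supermartingale. Hence a cluster
with few sites beyond `y` is very unlikely to have many sites beyond `y'`.

If `(R, 0)` belongs to a cluster with far fewer than `R ^ 3` sites, then the cluster contains the
whole segment from the origin to `(R, 0)`, and it makes such a jump at one of logarithmically many
scales. A union bound concludes.

All walks are cut off at a time horizon `T`, which is then sent to infinity; a small drift added to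
the harmonic function pays for the explorers that are still inside the cluster at time `T`.
-/

namespace CombIDLA

open Filter Topology

/-! ### Stopped Markov chains and growing clusters -/

lemma tsum_mul_le_tsum_mul_of_support {V : Type*} {p : V → V → ℝ≥0∞} {B : Set V} {F G : V → ℝ≥0∞}
    {z : V} (hB : ∀ w, p z w ≠ 0 → w ∈ B) (hFG : ∀ w ∈ B, F w ≤ G w) :
    ∑' w, p z w * F w ≤ ∑' w, p z w * G w := by
  refine ENNReal.tsum_le_tsum fun w => ?_
  rcases eq_or_ne (p z w) 0 with hw | hw
  · simp [hw]
  · gcongr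
    exact hFG w (hB w hw)

section Chain

variable {V : Type*} [DecidableEq V] {p : V → V → ℝ≥0∞} {o : V}

/-- `E_v[F(S_{τ ∧ T})]`, where `S` is the chain with transition matrix `p` and `τ` is its exit time
from `C`. -/
noncomputable def stoppedExp (p : V → V → ℝ≥0∞) (C : Finset V) (F : V → ℝ≥0∞) : ℕ → V → ℝ≥0∞
  | 0, v => F v
  | T + 1, v => if v ∈ C then ∑' w, p v w * stoppedExp p C F T w else F v

lemma stoppedExp_const_mul (a : ℝ≥0∞) (C : Finset V) (F : V → ℝ≥0∞) (T : ℕ) (v : V) :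
    stoppedExp p C (fun z => a * F z) T v = a * stoppedExp p C F T v := by
  induction T generalizing v with
  | zero => rfl
  | succ T ih =>
    simp only [stoppedExp, ih, mul_left_comm _ a, ENNReal.tsum_mul_left]
    split_ifs <;> rfl

lemma stoppedExp_zero (C : Finset V) (T : ℕ) (v : V) : stoppedExp p C (fun _ => 0) T v = 0 := by
  simpa using stoppedExp_const_mul (p := p) 0 C (fun _ => 0) T v

variable {C : Finset V} {B : Set V} {F G u : V → ℝ≥0∞} {a g η : ℝ≥0∞} {T k : ℕ} {v : V}

lemma stoppedExp_mono (hB : ∀ z ∈ C, ∀ w, p z w ≠ 0 → w ∈ B) (hFG : ∀ z ∈ B, F z ≤ G z)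
    (T : ℕ) (hv : v ∈ B) : stoppedExp p C F T v ≤ stoppedExp p C G T v := by
  induction T generalizing v with
  | zero => exact hFG v hv
  | succ T ih =>
    simp only [stoppedExp]
    split_ifs with hvC
    · exact tsum_mul_le_tsum_mul_of_support (hB v hvC) fun w hw => ih hw
    · exact hFG v hv

/- The drift `η` pays for the explorers that are still inside `C` at time `T`, where nothing is
known about `u` from below. -/
lemma stoppedExp_le (hp : ∀ z ∈ C, ∑' w, p z w ≤ 1) (hB : ∀ z ∈ C, ∀ w, p z w ≠ 0 → w ∈ B)
    (hu : ∀ z ∈ C, ∑' w, p z w * u w + η ≤ u z) (hin : ∀ z ∈ C, F z ≤ g)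
    (hout : ∀ z ∈ B, z ∉ C → F z ≤ g * u z) (T : ℕ) (hv : v ∈ B) :
    stoppedExp p C F T v ≤ g * (u v + (1 - T * η)) := by
  induction T generalizing v with
  | zero =>
    by_cases hvC : v ∈ C
    · calc F v ≤ g * 1 := by simpa using hin v hvC
        _ ≤ g * (u v + (1 - (0 : ℕ) * η)) := by gcongr; simp
    · exact (hout v hv hvC).trans (by gcongr; exact le_self_add)
  | succ T ih =>
    simp only [stoppedExp]
    split_ifs with hvC
    · have hrem : 1 - T * η ≤ (1 - (T + 1 : ℕ) * η) + η := by
        rw [Nat.cast_succ, add_mul, one_mul, ← tsub_tsub]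
        exact le_tsub_add
      calc ∑' w, p v w * stoppedExp p C F T w
          ≤ ∑' w, p v w * (g * (u w + (1 - T * η))) :=
            tsum_mul_le_tsum_mul_of_support (hB v hvC) fun w hw => ih hw
        _ = g * (∑' w, p v w * u w + (∑' w, p v w) * (1 - T * η)) := by
            simp only [mul_left_comm _ g, mul_add, ENNReal.tsum_add, ENNReal.tsum_mul_left,
              ENNReal.tsum_mul_right]
        _ ≤ g * (∑' w, p v w * u w + 1 * ((1 - (T + 1 : ℕ) * η) + η)) := by
            gcongr
            exact hp v hvC
        _ = g * (∑' w, p v w * u w + η + (1 - (T + 1 : ℕ) * η)) := by ring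
        _ ≤ g * (u v + (1 - (T + 1 : ℕ) * η)) := by
            gcongr
            exact hu v hvC
    · exact (hout v hv hvC).trans (by gcongr; exact le_self_add)

/-- `E[G(A_k)]`, where the cluster `A_k` is grown from `∅` by `k` explorers launched at `o`, each of
which is added at the site where it leaves the current cluster, or where it stands at time `T`. -/
noncomputable def clusterExp (p : V → V → ℝ≥0∞) (o : V) (T : ℕ) :
    ℕ → (Finset V → ℝ≥0∞) → ℝ≥0∞
  | 0, G => G ∅
  | k + 1, G => clusterExp p o T k fun C => stoppedExp p C (fun z => G (insert z C)) T o

/-- A property of finite sets which holds for `∅` and is preserved when a cluster grows by one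
explorer of the chain `p` launched at `o`. -/
structure IsGrowthInvariant (p : V → V → ℝ≥0∞) (o : V) (Q : Finset V → Prop) : Prop where
  empty : Q ∅
  insert_origin : ∀ C, Q C → Q (insert o C)
  insert_step : ∀ C, Q C → ∀ z ∈ C, ∀ w, p z w ≠ 0 → Q (insert w C)

lemma clusterExp_const_mul (a : ℝ≥0∞) (T k : ℕ) (G : Finset V → ℝ≥0∞) :
    clusterExp p o T k (fun C => a * G C) = a * clusterExp p o T k G := by
  induction k generalizing G with
  | zero => rfl
  | succ k ih => simp only [clusterExp, stoppedExp_const_mul, ih]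

lemma clusterExp_zero (T k : ℕ) : clusterExp p o T k (fun _ => 0) = 0 := by
  simpa using clusterExp_const_mul (p := p) (o := o) 0 T k fun _ => 0

variable {Q : Finset V → Prop} {G₁ G₂ : Finset V → ℝ≥0∞}

lemma clusterExp_mono (hQ : IsGrowthInvariant p o Q)
    (hG : ∀ C, Q C → C.card ≤ k → G₁ C ≤ G₂ C) :
    clusterExp p o T k G₁ ≤ clusterExp p o T k G₂ := by
  induction k generalizing G₁ G₂ with
  | zero => exact hG ∅ hQ.empty le_rfl
  | succ k ih =>
    refine ih fun C hC hCk => ?_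
    refine stoppedExp_mono (B := {z | Q (insert z C)}) (hQ.insert_step C hC) (fun z hz => ?_) T
      (hQ.insert_origin C hC)
    exact hG _ hz ((Finset.card_insert_le z C).trans (by lia))

lemma clusterExp_le_pow_mul (hQ : IsGrowthInvariant p o Q)
    (hG : ∀ C, Q C → C.card < k → stoppedExp p C (fun z => G₁ (insert z C)) T o ≤ a * G₁ C) :
    clusterExp p o T k G₁ ≤ a ^ k * G₁ ∅ := by
  induction k with
  | zero => simp [clusterExp]
  | succ k ih =>
    calc clusterExp p o T (k + 1) G₁
        ≤ clusterExp p o T k fun C => a * G₁ C :=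
          clusterExp_mono hQ fun C hC hCk => hG C hC (by lia)
      _ = a * clusterExp p o T k G₁ := clusterExp_const_mul a T k G₁
      _ ≤ a * (a ^ k * G₁ ∅) := by
          gcongr
          exact ih fun C hC hCk => hG C hC (by lia)
      _ = a ^ (k + 1) * G₁ ∅ := by ring

end Chain

section StoppedPath

variable {V : Type*} [DecidableEq V]

/-- The position of a path at its exit from `C`, or at its last time if it stays in `C`. -/
def stoppedPos (C : Finset V) : (T : ℕ) → (Fin (T + 1) → V) → V
  | 0, q => q 0
  | T + 1, q => if q 0 ∈ C then stoppedPos C T (Fin.tail q) else q 0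

lemma stoppedPos_eq_of_exit {C : Finset V} {T n : ℕ} {S : ℕ → V} (hn : n ≤ T)
    (hin : ∀ m < n, S m ∈ C) (hout : S n ∉ C) : stoppedPos C T (fun i => S i) = S n := by
  induction T generalizing S n with
  | zero => rw [Nat.le_zero.1 hn]; rfl
  | succ T ih =>
    cases n with
    | zero => simp [stoppedPos, hout]
    | succ n =>
      simp only [stoppedPos, Fin.val_zero, hin 0 n.succ_pos, if_true]
      exact ih (S := fun m => S (m + 1)) (by lia) (fun m hm => hin (m + 1) (by lia)) hout

lemma stoppedPos_mem_of_forall_mem {C : Finset V} {S : ℕ → V} (hS : ∀ m, S m ∈ C)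
    (T : ℕ) : stoppedPos C T (fun i => S i) ∈ C := by
  induction T generalizing S with
  | zero => exact hS 0
  | succ T ih =>
    simp only [stoppedPos, Fin.val_zero, hS 0, if_true]
    exact ih (S := fun m => S (m + 1)) fun m => hS (m + 1)

/-- The cluster grown by `k` explorers whose paths are cut off at the horizon `T`. -/
def truncCluster (T : ℕ) : (k : ℕ) → (Fin k → Fin (T + 1) → V) → Finset V
  | 0, _ => ∅
  | k + 1, q => insert (stoppedPos (truncCluster T k (Fin.init q)) T (q (Fin.last k)))
      (truncCluster T k (Fin.init q))

end StoppedPath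

/-! ### The walk on the comb -/

lemma combAdj_iff_of_snd_eq_zero {z w : ℤ × ℤ} (hz : z.2 = 0) :
    combAdj z w ↔ w ∈ ({(z.1 + 1, 0), (z.1 - 1, 0), (z.1, 1), (z.1, -1)} : Finset (ℤ × ℤ)) := by
  obtain ⟨x, k⟩ := z
  obtain ⟨x', k'⟩ := w
  simp only [combAdj, Finset.mem_insert, Finset.mem_singleton, Prod.mk.injEq, abs_eq zero_le_one]
    at hz ⊢
  lia

lemma combAdj_iff_of_snd_ne_zero {z w : ℤ × ℤ} (hz : z.2 ≠ 0) :
    combAdj z w ↔ w ∈ ({(z.1, z.2 + 1), (z.1, z.2 - 1)} : Finset (ℤ × ℤ)) := by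
  obtain ⟨x, k⟩ := z
  obtain ⟨x', k'⟩ := w
  simp only [combAdj, Finset.mem_insert, Finset.mem_singleton, Prod.mk.injEq, abs_eq zero_le_one]
    at hz ⊢
  lia

lemma stepProb_ne_zero_iff {z w : ℤ × ℤ} : stepProb z w ≠ 0 ↔ combAdj z w := by
  simp [stepProb]

lemma tsum_stepProb_mul (z : ℤ × ℤ) (F : ℤ × ℤ → ℝ≥0∞) :
    ∑' w, stepProb z w * F w =
      if z.2 = 0 then 4⁻¹ * (F (z.1 + 1, 0) + F (z.1 - 1, 0) + F (z.1, 1) + F (z.1, -1))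
      else 2⁻¹ * (F (z.1, z.2 + 1) + F (z.1, z.2 - 1)) := by
  split_ifs with hz
  · rw [tsum_eq_sum fun w hw => by
      rw [stepProb, if_neg (mt (combAdj_iff_of_snd_eq_zero hz).1 hw), zero_mul]]
    rw [Finset.sum_congr rfl fun w hw => by
      rw [stepProb, if_pos ((combAdj_iff_of_snd_eq_zero hz).2 hw)]]
    rw [← Finset.mul_sum, Finset.sum_insert (by simp; lia), Finset.sum_insert (by simp),
      Finset.sum_insert (by simp), Finset.sum_singleton]
    simp [combDeg, hz, add_assoc]
  · rw [tsum_eq_sum fun w hw => by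
      rw [stepProb, if_neg (mt (combAdj_iff_of_snd_ne_zero hz).1 hw), zero_mul]]
    rw [Finset.sum_congr rfl fun w hw => by
      rw [stepProb, if_pos ((combAdj_iff_of_snd_ne_zero hz).2 hw)]]
    rw [← Finset.mul_sum, Finset.sum_insert (by simp; lia), Finset.sum_singleton]
    simp [combDeg, hz]

lemma tsum_stepProb (z : ℤ × ℤ) : ∑' w, stepProb z w = 1 := by
  have h := tsum_stepProb_mul z fun _ => 1
  simp only [mul_one] at h
  rw [h]
  split_ifs
  · rw [show (1 + 1 + 1 + 1 : ℝ≥0∞) = 4 by norm_num]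
    exact ENNReal.inv_mul_cancel (by norm_num) (by norm_num)
  · rw [one_add_one_eq_two]
    exact ENNReal.inv_mul_cancel (by norm_num) (by norm_num)

lemma tsum_pathProb_zero_mul (v : ℤ × ℤ) (F : (Fin (0 + 1) → ℤ × ℤ) → ℝ≥0∞) :
    ∑' q, pathProb v q * F q = F fun _ => v := by
  rw [tsum_eq_single fun _ => v]
  · simp [pathProb]
  · intro q hq
    have hqv : q 0 ≠ v := fun h => hq (funext fun i => by rw [Fin.fin_one_eq_zero i, h])
    simp [pathProb, hqv]

lemma pathProb_cons (u v : ℤ × ℤ) {T : ℕ} (q : Fin (T + 1) → ℤ × ℤ) :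
    pathProb v (Fin.cons u q : Fin (T + 1 + 1) → ℤ × ℤ) =
      if u = v then ∑' w, stepProb v w * pathProb w q else 0 := by
  have hfirst : ∑' w, stepProb v w * pathProb w q = stepProb v (q 0) * pathProb (q 0) q :=
    tsum_eq_single _ fun w hw => by simp [pathProb, hw.symm]
  rw [hfirst]
  split_ifs with huv
  · simp [pathProb, Fin.prod_univ_succ, huv]
  · simp [pathProb, huv]

lemma tsum_pathProb_succ_mul (v : ℤ × ℤ) (T : ℕ) (F : (Fin (T + 1 + 1) → ℤ × ℤ) → ℝ≥0∞) :
    ∑' q, pathProb v q * F q =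
      ∑' w, stepProb v w * ∑' q : Fin (T + 1) → ℤ × ℤ, pathProb w q * F (Fin.cons v q) := by
  calc ∑' q, pathProb v q * F q
      = ∑' (u : ℤ × ℤ) (q : Fin (T + 1) → ℤ × ℤ),
          pathProb v (Fin.cons u q : Fin (T + 1 + 1) → ℤ × ℤ) * F (Fin.cons u q) := by
        rw [← ENNReal.tsum_prod, ← (Fin.consEquiv fun _ : Fin (T + 1 + 1) => ℤ × ℤ).tsum_eq]
        rfl
    _ = ∑' (q : Fin (T + 1) → ℤ × ℤ) (w : ℤ × ℤ),
          stepProb v w * (pathProb w q * F (Fin.cons v q)) := by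
        rw [tsum_eq_single v fun u hu => by simp [pathProb_cons, hu]]
        simp only [pathProb_cons, if_true, ← ENNReal.tsum_mul_right, mul_assoc]
    _ = _ := by
        rw [ENNReal.tsum_comm]
        simp only [ENNReal.tsum_mul_left]

lemma tsum_pathProb (v : ℤ × ℤ) (T : ℕ) : ∑' q : Fin (T + 1) → ℤ × ℤ, pathProb v q = 1 := by
  induction T generalizing v with
  | zero => simpa using tsum_pathProb_zero_mul v fun _ => 1
  | succ T ih => simpa [ih, tsum_stepProb] using tsum_pathProb_succ_mul v T fun _ => 1

lemma tsum_pathProb_mul_stoppedPos (C : Finset (ℤ × ℤ)) (F : ℤ × ℤ → ℝ≥0∞) (T : ℕ) (v : ℤ × ℤ) :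
    ∑' q, pathProb v q * F (stoppedPos C T q) = stoppedExp stepProb C F T v := by
  induction T generalizing v with
  | zero => exact tsum_pathProb_zero_mul v _
  | succ T ih =>
    rw [tsum_pathProb_succ_mul]
    simp only [stoppedPos, Fin.cons_zero, Fin.tail_cons, stoppedExp]
    split_ifs with hv
    · simp only [ih]
    · simp only [ENNReal.tsum_mul_right, tsum_pathProb, one_mul, tsum_stepProb]

/-! ### Clusters of explorers on the comb -/

lemma tsum_prod_pathProb_mul_truncCluster (T k : ℕ) (G : Finset (ℤ × ℤ) → ℝ≥0∞) :
    ∑' q : Fin k → Fin (T + 1) → ℤ × ℤ, (∏ i, pathProb (0, 0) (q i)) * G (truncCluster T k q) =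
      clusterExp stepProb (0, 0) T k G := by
  induction k generalizing G with
  | zero => simp [tsum_fintype, truncCluster, clusterExp]
  | succ k ih =>
    rw [clusterExp, ← ih, ← (Fin.snocEquiv fun _ : Fin (k + 1) => Fin (T + 1) → ℤ × ℤ).tsum_eq,
      ENNReal.tsum_prod', ENNReal.tsum_comm]
    refine tsum_congr fun q => ?_
    rw [← tsum_pathProb_mul_stoppedPos, ← ENNReal.tsum_mul_left]
    refine tsum_congr fun r => ?_
    simp [Fin.snocEquiv, Fin.prod_univ_castSucc, truncCluster, mul_assoc]

/-- The cluster `dlaCluster W k` as a finset. -/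
noncomputable def dlaFinset (W : ℕ → ℕ → ℤ × ℤ) : ℕ → Finset (ℤ × ℤ)
  | 0 => ∅
  | k + 1 => insert (settlePoint (dlaFinset W k) (W k)) (dlaFinset W k)

lemma coe_dlaFinset (W : ℕ → ℕ → ℤ × ℤ) (k : ℕ) :
    (dlaFinset W k : Set (ℤ × ℤ)) = dlaCluster W k := by
  induction k with
  | zero => simp [dlaFinset, dlaCluster]
  | succ k ih => rw [dlaFinset, Finset.coe_insert, ih, dlaCluster, Set.union_singleton]

lemma card_dlaFinset_le (W : ℕ → ℕ → ℤ × ℤ) (k : ℕ) : (dlaFinset W k).card ≤ k := by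
  induction k with
  | zero => simp [dlaFinset]
  | succ k ih => exact (Finset.card_insert_le _ _).trans (by lia)

/- An explorer which never leaves the cluster has `settlePoint` equal to its starting point, by the
convention `sInf ∅ = 0`, so both sides leave the cluster unchanged. -/
lemma eventually_insert_stoppedPos_eq (C : Finset (ℤ × ℤ)) (S : ℕ → ℤ × ℤ) :
    ∀ᶠ T in atTop, insert (stoppedPos C T fun i => S i) C = insert (settlePoint C S) C := by
  by_cases hexit : ∃ n, S n ∉ C
  · have hexit' : {n | S n ∉ (C : Set (ℤ × ℤ))}.Nonempty := hexit
    filter_upwards [eventually_ge_atTop (sInf {n | S n ∉ (C : Set (ℤ × ℤ))})] with T hT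
    rw [stoppedPos_eq_of_exit hT (fun m hm => ?_) (by simpa using Nat.sInf_mem hexit'), settlePoint]
    simpa using Nat.notMem_of_lt_sInf hm
  · push Not at hexit
    have hsettle : settlePoint C S ∈ C := hexit _
    exact Eventually.of_forall fun T => by
      rw [Finset.insert_eq_of_mem (stoppedPos_mem_of_forall_mem hexit T),
        Finset.insert_eq_of_mem hsettle]

lemma eventually_truncCluster_eq_dlaFinset (W : ℕ → ℕ → ℤ × ℤ) (k : ℕ) :
    ∀ᶠ T in atTop, truncCluster T k (fun i t => W i t) = dlaFinset W k := by
  induction k with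
  | zero => exact Eventually.of_forall fun T => rfl
  | succ k ih =>
    filter_upwards [ih, eventually_insert_stoppedPos_eq (dlaFinset W k) (W k)] with T hT hinsert
    rw [truncCluster, dlaFinset, ← hinsert, ← hT]
    rfl

section Measure

variable {Ω : Type*} [MeasurableSpace Ω] {P : Measure Ω} {W : ℕ → ℕ → Ω → ℤ × ℤ}

lemma measure_setOf_eventually_mem_le {s : ℕ → Set Ω} {f : ℕ → ℝ≥0∞} {b : ℝ≥0∞}
    (hs : ∀ᶠ n in atTop, P (s n) ≤ f n) (hf : Tendsto f atTop (𝓝 b)) :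
    P {ω | ∀ᶠ n in atTop, ω ∈ s n} ≤ b := by
  have hunion : {ω | ∀ᶠ n in atTop, ω ∈ s n} = ⋃ m, ⋂ n ≥ m, s n := by
    ext ω
    simp
  have hmono : Monotone fun m => ⋂ n ≥ m, s n := fun m m' hm =>
    Set.biInter_subset_biInter_left fun n hn => le_trans hm hn
  rw [hunion]
  refine le_of_tendsto_of_tendsto (tendsto_measure_iUnion_atTop hmono) hf ?_
  filter_upwards [hs] with m hm
  exact (measure_mono (Set.biInter_subset_of_mem (Set.mem_ofPred.2 le_rfl))).trans hm

lemma measure_truncCluster_mem_le (hW : IsIIDCombWalks P W) (T k : ℕ) (𝒬 : Set (Finset (ℤ × ℤ))) :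
    P {ω | truncCluster T k (fun i t => W i t ω) ∈ 𝒬} ≤
      clusterExp stepProb (0, 0) T k (𝒬.indicator 1) := by
  let cyl (q : Fin k → Fin (T + 1) → ℤ × ℤ) : Set Ω :=
    {ω | ∀ (i : Fin k) (t : Fin (T + 1)), W i t ω = q i t}
  have hcover : {ω | truncCluster T k (fun i t => W i t ω) ∈ 𝒬} ⊆
      ⋃ q, {ω ∈ cyl q | truncCluster T k q ∈ 𝒬} := fun ω hω =>
    Set.mem_iUnion.2 ⟨fun i t => W i t ω, fun _ _ => rfl, hω⟩
  rw [← tsum_prod_pathProb_mul_truncCluster]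
  refine (measure_mono hcover).trans ((measure_iUnion_le _).trans ?_)
  refine ENNReal.tsum_le_tsum fun q => ?_
  by_cases hq : truncCluster T k q ∈ 𝒬
  · simpa [hq, cyl] using (hW.2.2 k T q).le
  · simp [hq]

lemma measure_dlaFinset_mem_le (hW : IsIIDCombWalks P W) {k : ℕ} {𝒬 : Set (Finset (ℤ × ℤ))}
    {f : ℕ → ℝ≥0∞} {b : ℝ≥0∞} (hf : Tendsto f atTop (𝓝 b))
    (h𝒬 : ∀ᶠ T in atTop, clusterExp stepProb (0, 0) T k (𝒬.indicator 1) ≤ f T) :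
    P {ω | dlaFinset (fun i t => W i t ω) k ∈ 𝒬} ≤ b := by
  refine (measure_mono fun ω hω => ?_).trans (measure_setOf_eventually_mem_le
    (h𝒬.mono fun T hT => (measure_truncCluster_mem_le hW T k 𝒬).trans hT) hf)
  filter_upwards [eventually_truncCluster_eq_dlaFinset (fun i t => W i t ω) k] with T hT
  exact hT ▸ hω

end Measure

/-! ### Ancestral sets -/

/-- A finite set of sites closed under taking parents: it contains the geodesic to the origin of
each of its elements. -/
def IsAncestral (D : Finset (ℤ × ℤ)) : Prop := ∀ z ∈ D, parent z ∈ D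

lemma parent_eq_or_parent_eq {z w : ℤ × ℤ} (h : combAdj z w) : parent w = z ∨ parent z = w := by
  obtain ⟨x, k⟩ := z
  obtain ⟨x', k'⟩ := w
  simp only [combAdj, parent, abs_eq zero_le_one] at h ⊢
  split_ifs <;> simp only [Prod.mk.injEq] <;>
    grind [Int.sign_eq_one_of_pos, Int.sign_eq_neg_one_of_neg]

lemma isGrowthInvariant_isAncestral : IsGrowthInvariant stepProb (0, 0) IsAncestral where
  empty := by simp [IsAncestral]
  insert_origin C hC := by
    simp only [IsAncestral, Finset.forall_mem_insert]
    exact ⟨by simp [parent], fun z hz => Finset.mem_insert_of_mem (hC z hz)⟩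
  insert_step C hC z hz w hzw := by
    rcases parent_eq_or_parent_eq (stepProb_ne_zero_iff.1 hzw) with rfl | rfl
    · simp only [IsAncestral, Finset.forall_mem_insert]
      exact ⟨Finset.mem_insert_of_mem hz, fun z hz => Finset.mem_insert_of_mem (hC z hz)⟩
    · rwa [Finset.insert_eq_of_mem (hC z hz)]

lemma forall_uIcc_zero_of_forall_sub_sign {p : ℤ → Prop} (hp : ∀ k, p k → p (k - k.sign)) {k : ℤ}
    (hk : p k) : ∀ j ∈ Finset.uIcc 0 k, p j := by
  induction hn : k.natAbs generalizing k with
  | zero =>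
    obtain rfl := Int.natAbs_eq_zero.1 hn
    simpa using hk
  | succ n ih =>
    intro j hj
    rcases eq_or_ne j k with rfl | hjk
    · exact hk
    · rw [Finset.mem_uIcc] at hj
      rcases lt_trichotomy k 0 with hneg | rfl | hpos
      · exact ih (hp k hk) (by grind [Int.sign_eq_neg_one_of_neg]) j
          (by grind [Int.sign_eq_neg_one_of_neg, Finset.mem_uIcc])
      · simp at hn
      · exact ih (hp k hk) (by grind [Int.sign_eq_one_of_pos]) j
          (by grind [Int.sign_eq_one_of_pos, Finset.mem_uIcc])

namespace IsAncestral

variable {D : Finset (ℤ × ℤ)} {x k : ℤ}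

lemma column_mem (hD : IsAncestral D) (h : (x, k) ∈ D) : ∀ j ∈ Finset.uIcc 0 k, (x, j) ∈ D :=
  forall_uIcc_zero_of_forall_sub_sign (p := fun j => (x, j) ∈ D) (fun j hj => by
    rcases eq_or_ne j 0 with rfl | hj0
    · simpa using hj
    · simpa [parent, hj0] using hD _ hj) h

lemma axis_mem (hD : IsAncestral D) (h : (x, 0) ∈ D) : ∀ i ∈ Finset.uIcc 0 x, (i, 0) ∈ D :=
  forall_uIcc_zero_of_forall_sub_sign (p := fun i => (i, 0) ∈ D)
    (fun i hi => by simpa [parent] using hD _ hi) h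

end IsAncestral

/-- The number of sites of `C` in the column over `(x, 0)`. -/
def columnCount (C : Finset (ℤ × ℤ)) (x : ℤ) : ℕ := (C.filter fun z => z.1 = x).card

/-- The number of sites of `C` in the columns `y, y + 1, …`. -/
def tailCount (C : Finset (ℤ × ℤ)) (y : ℤ) : ℕ := (C.filter fun z => y ≤ z.1).card

section Counts

variable {C D : Finset (ℤ × ℤ)} {x y k R : ℤ} {z : ℤ × ℤ}

lemma columnCount_le_card (C : Finset (ℤ × ℤ)) (x : ℤ) : columnCount C x ≤ C.card :=
  Finset.card_filter_le _ _

lemma tailCount_le_card (C : Finset (ℤ × ℤ)) (y : ℤ) : tailCount C y ≤ C.card :=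
  Finset.card_filter_le _ _

lemma tailCount_mono (h : C ⊆ D) (y : ℤ) : tailCount C y ≤ tailCount D y :=
  Finset.card_le_card (Finset.filter_subset_filter _ h)

lemma tailCount_insert (hz : z ∉ C) (y : ℤ) :
    tailCount (insert z C) y = tailCount C y + if y ≤ z.1 then 1 else 0 := by
  rw [tailCount, Finset.filter_insert]
  split_ifs
  · exact Finset.card_insert_of_notMem fun h => hz (Finset.mem_filter.1 h).1
  · rfl

lemma columnCount_insert_le (C : Finset (ℤ × ℤ)) (z : ℤ × ℤ) (x : ℤ) :
    columnCount (insert z C) x ≤ columnCount C x + 1 := by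
  rw [columnCount, Finset.filter_insert]
  split_ifs
  · exact Finset.card_insert_le _ _
  · exact Nat.le_succ _

lemma natAbs_le_columnCount (h : IsAncestral (insert (x, k) C)) : k.natAbs ≤ columnCount C x := by
  have hcolumn : (Finset.uIcc 0 k).card ≤ columnCount (insert (x, k) C) x :=
    Finset.card_le_card_of_injOn (fun j => (x, j))
      (fun j hj => Finset.mem_filter.2 ⟨h.column_mem (Finset.mem_insert_self _ _) j hj, rfl⟩)
      (Prod.mk_right_injective x).injOn
  rw [Int.card_uIcc, sub_zero] at hcolumn
  have := columnCount_insert_le C (x, k) x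
  lia

lemma le_tailCount_of_axis_mem (hD : IsAncestral D) (hR : (R, 0) ∈ D) (hy : 0 ≤ y) :
    R - y + 1 ≤ tailCount D y := by
  have haxis : (Finset.Icc y R).card ≤ tailCount D y :=
    Finset.card_le_card_of_injOn (fun i => (i, 0))
      (fun i hi => by
        have hi' := Finset.mem_Icc.1 hi
        exact Finset.mem_filter.2
          ⟨hD.axis_mem hR i
            (Finset.Icc_subset_uIcc (Finset.mem_Icc.2 ⟨hy.trans hi'.1, hi'.2⟩)), hi'.1⟩)
      (Prod.mk_left_injective 0).injOn
  rw [Int.card_Icc] at haxis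
  lia

lemma sum_columnCount_le_tailCount (C : Finset (ℤ × ℤ)) (y : ℤ) (s : Finset ℕ) :
    ∑ n ∈ s, columnCount C (y + n) ≤ tailCount C y := by
  simp only [columnCount, tailCount]
  rw [← Finset.card_biUnion]
  · refine Finset.card_le_card fun z hz => ?_
    simp only [Finset.mem_biUnion, Finset.mem_filter] at hz ⊢
    obtain ⟨n, -, hzC, hzn⟩ := hz
    exact ⟨hzC, by lia⟩
  · intro m _ n _ hmn
    refine Finset.disjoint_left.2 fun z hzm hzn => hmn ?_
    have := (Finset.mem_filter.1 hzm).2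
    have := (Finset.mem_filter.1 hzn).2
    lia

lemma card_mul_le_tailCount {h : ℕ} {s : Finset ℕ} (hs : ∀ n ∈ s, h ≤ columnCount C (y + n)) :
    s.card * h ≤ tailCount C y :=
  (Finset.card_nsmul_le_sum s _ h hs).trans (sum_columnCount_le_tailCount C y s)

end Counts

/-! ### Growth of a discrete Sturm–Liouville solution -/

/-- The solution of `g (n + 1) - 2 * g n + g (n - 1) = 2 * t n * g n` with `g (-1) = g 0 = 1`. -/
noncomputable def growth (t : ℕ → ℝ) : ℕ → ℝ
  | 0 => 1
  | 1 => 1 + 2 * t 0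
  | n + 2 => 2 * (1 + t (n + 1)) * growth t (n + 1) - growth t n

section Growth

variable {t : ℕ → ℝ} {c : ℝ} {bad : Finset ℕ} {s v : ℕ}

lemma growth_succ (t : ℕ → ℝ) (n : ℕ) :
    growth t (n + 1) = growth t n + 2 * ∑ i ∈ Finset.range (n + 1), t i * growth t i := by
  induction n with
  | zero => simp [growth]
  | succ n ih =>
    rw [Finset.sum_range_succ, growth]
    linarith

lemma one_le_growth (ht : ∀ n, 0 ≤ t n) (n : ℕ) : 1 ≤ growth t n := by
  induction n using Nat.strong_induction_on with
  | _ n ih =>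
    cases n with
    | zero => exact le_rfl
    | succ n =>
      have hslope : 0 ≤ ∑ i ∈ Finset.range (n + 1), t i * growth t i :=
        Finset.sum_nonneg fun i hi =>
          mul_nonneg (ht i) (zero_le_one.trans (ih i (Finset.mem_range.1 hi)))
      rw [growth_succ]
      linarith [ih n n.lt_succ_self]

lemma growth_nonneg (ht : ∀ n, 0 ≤ t n) (n : ℕ) : 0 ≤ growth t n :=
  zero_le_one.trans (one_le_growth ht n)

lemma growth_monotone (ht : ∀ n, 0 ≤ t n) : Monotone (growth t) :=
  monotone_nat_of_le_succ fun n => by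
    have hslope : 0 ≤ ∑ i ∈ Finset.range (n + 1), t i * growth t i :=
      Finset.sum_nonneg fun i _ => mul_nonneg (ht i) (growth_nonneg ht i)
    rw [growth_succ]
    linarith

lemma growth_add_le_growth_succ (ht : ∀ n, 0 ≤ t n) (s n : ℕ) :
    growth t n + 2 * growth t s * ∑ i ∈ Finset.Ico s (n + 1), t i ≤ growth t (n + 1) := by
  have hsum : growth t s * ∑ i ∈ Finset.Ico s (n + 1), t i ≤
      ∑ i ∈ Finset.range (n + 1), t i * growth t i := by
    rw [Finset.mul_sum]
    calc ∑ i ∈ Finset.Ico s (n + 1), growth t s * t i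
        ≤ ∑ i ∈ Finset.Ico s (n + 1), t i * growth t i := Finset.sum_le_sum fun i hi => by
          rw [mul_comm]
          exact mul_le_mul_of_nonneg_left (growth_monotone ht (Finset.mem_Ico.1 hi).1) (ht i)
      _ ≤ ∑ i ∈ Finset.range (n + 1), t i * growth t i :=
          Finset.sum_le_sum_of_subset_of_nonneg
            (fun i hi => Finset.mem_range.2 (Finset.mem_Ico.1 hi).2)
            fun i _ _ => mul_nonneg (ht i) (growth_nonneg ht i)
  rw [growth_succ]
  linarith

lemma mul_card_sub_card_le_sum {I : Finset ℕ} (ht : ∀ n, 0 ≤ t n)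
    (htc : ∀ n ∈ I, n ∉ bad → c ≤ t n) : c * (I.card - (I ∩ bad).card) ≤ ∑ i ∈ I, t i := by
  have hcard : ((I \ bad).card : ℝ) = I.card - (I ∩ bad).card := by
    rw [eq_sub_iff_add_eq]
    exact_mod_cast Finset.card_sdiff_add_card_inter I bad
  calc c * (I.card - (I ∩ bad).card) = (I \ bad).card • c := by rw [← hcard, nsmul_eq_mul, mul_comm]
    _ ≤ ∑ i ∈ I \ bad, t i := Finset.card_nsmul_le_sum _ _ _ fun i hi =>
        htc i (Finset.mem_sdiff.1 hi).1 (Finset.mem_sdiff.1 hi).2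
    _ ≤ ∑ i ∈ I, t i :=
        Finset.sum_le_sum_of_subset_of_nonneg Finset.sdiff_subset fun i _ _ => ht i

lemma growth_mul_le_growth_add (ht : ∀ n, 0 ≤ t n) (hc : 0 ≤ c)
    (htc : ∀ n ∈ Finset.Ico s (s + 2 * v), n ∉ bad → c ≤ t n)
    (hbad : (Finset.Ico s (s + 2 * v) ∩ bad).card ≤ v) {d : ℕ} (hd : d ≤ v) :
    growth t s * (1 + c * (d * (d + 1))) ≤ growth t (s + v + d) := by
  induction d with
  | zero => simpa using growth_monotone ht (Nat.le_add_right s v)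
  | succ d ih =>
    have hI : Finset.Ico s (s + v + d + 1) ⊆ Finset.Ico s (s + 2 * v) :=
      Finset.Ico_subset_Ico_right (by lia)
    have hsum : c * (d + 1) ≤ ∑ i ∈ Finset.Ico s (s + v + d + 1), t i := by
      refine le_trans ?_ (mul_card_sub_card_le_sum ht fun n hn => htc n (hI hn))
      have hinter : ((Finset.Ico s (s + v + d + 1) ∩ bad).card : ℝ) ≤ v := by
        exact_mod_cast (Finset.card_le_card (Finset.inter_subset_inter_right hI)).trans hbad
      have hlength : ((Finset.Ico s (s + v + d + 1)).card : ℝ) = v + d + 1 := by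
        rw [Nat.card_Ico]
        norm_cast
        lia
      gcongr
      linarith
    calc growth t s * (1 + c * ((d + 1 : ℕ) * ((d + 1 : ℕ) + 1)))
        = growth t s * (1 + c * (d * (d + 1))) + 2 * growth t s * (c * (d + 1)) := by
          push_cast
          ring
      _ ≤ growth t (s + v + d) +
            2 * growth t s * ∑ i ∈ Finset.Ico s (s + v + d + 1), t i := by
          have := growth_nonneg ht s
          gcongr
          exact ih (by lia)
      _ ≤ growth t (s + v + (d + 1)) := growth_add_le_growth_succ ht s (s + v + d)

lemma two_mul_growth_le_growth_add (ht : ∀ n, 0 ≤ t n) (hc : 0 ≤ c) (hcv : 1 ≤ c * v ^ 2)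
    (htc : ∀ n ∈ Finset.Ico s (s + 2 * v), n ∉ bad → c ≤ t n)
    (hbad : (Finset.Ico s (s + 2 * v) ∩ bad).card ≤ v) :
    2 * growth t s ≤ growth t (s + 2 * v) :=
  calc 2 * growth t s ≤ growth t s * (1 + c * (v * (v + 1))) := by
        nlinarith [growth_nonneg ht s, mul_nonneg hc v.cast_nonneg]
    _ ≤ growth t (s + v + v) := growth_mul_le_growth_add ht hc htc hbad le_rfl
    _ = growth t (s + 2 * v) := by rw [two_mul, add_assoc]

lemma two_pow_le_growth_mul_two_pow (ht : ∀ n, 0 ≤ t n) (hc : 0 ≤ c) (hcv : 1 ≤ c * v ^ 2)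
    {b g : ℕ} (htc : ∀ n < 2 * v * b, n ∉ bad → c ≤ t n) (hbad : bad.card ≤ v * g) :
    2 ^ b ≤ growth t (2 * v * b) * 2 ^ g := by
  induction b generalizing bad g with
  | zero => simpa [growth] using one_le_pow₀ (one_le_two (α := ℝ))
  | succ b ih =>
    rw [mul_add_one] at htc ⊢
    let block := Finset.Ico (2 * v * b) (2 * v * b + 2 * v)
    by_cases hblock : (block ∩ bad).card ≤ v
    · have hdouble : 2 * growth t (2 * v * b) ≤ growth t (2 * v * b + 2 * v) :=
        two_mul_growth_le_growth_add ht hc hcv (fun n hn => htc n (Finset.mem_Ico.1 hn).2) hblock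
      calc (2 : ℝ) ^ (b + 1) = 2 * 2 ^ b := by ring
        _ ≤ 2 * (growth t (2 * v * b) * 2 ^ g) := by
            gcongr
            exact ih (fun n hn => htc n (by lia)) hbad
        _ = 2 * growth t (2 * v * b) * 2 ^ g := by ring
        _ ≤ growth t (2 * v * b + 2 * v) * 2 ^ g := by gcongr
    · have hcard := Finset.card_sdiff_add_card_inter bad block
      rw [Finset.inter_comm] at hcard
      obtain ⟨g, rfl⟩ : ∃ g', g = g' + 1 := Nat.exists_eq_succ_of_ne_zero fun hg => by
        rw [hg] at hbad
        lia
      have hrest : (bad \ block).card ≤ v * g := by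
        rw [mul_add_one] at hbad
        lia
      calc (2 : ℝ) ^ (b + 1) = 2 * 2 ^ b := by ring
        _ ≤ 2 * (growth t (2 * v * b) * 2 ^ g) := by
            gcongr
            refine ih (fun n hn hnb => htc n (by lia) fun hn' => hnb ?_) hrest
            exact Finset.mem_sdiff.2 ⟨hn', fun h => by
              have := (Finset.mem_Ico.1 h).1
              lia⟩
        _ = growth t (2 * v * b) * 2 ^ (g + 1) := by ring
        _ ≤ growth t (2 * v * b + 2 * v) * 2 ^ (g + 1) := by
            gcongr
            exact growth_monotone ht (by lia)

end Growth

/-! ### Harmonic functions on the comb -/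

/-- The average of `u` over the neighbours of `z` in the comb. -/
noncomputable def combMean (u : ℤ × ℤ → ℝ) (z : ℤ × ℤ) : ℝ :=
  if z.2 = 0 then (u (z.1 + 1, 0) + u (z.1 - 1, 0) + u (z.1, 1) + u (z.1, -1)) / 4
  else (u (z.1, z.2 + 1) + u (z.1, z.2 - 1)) / 2

lemma tsum_stepProb_mul_ofReal {u : ℤ × ℤ → ℝ} {z : ℤ × ℤ} (hu : ∀ w, combAdj z w → 0 ≤ u w) :
    0 ≤ combMean u z ∧
      ∑' w, stepProb z w * ENNReal.ofReal (u w) = ENNReal.ofReal (combMean u z) := by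
  rw [tsum_stepProb_mul, combMean]
  split_ifs with hz
  · simp only [combAdj_iff_of_snd_eq_zero hz, Finset.forall_mem_insert, Finset.mem_singleton,
      forall_eq] at hu
    obtain ⟨hright, hleft, hup, hdown⟩ := hu
    refine ⟨by positivity, ?_⟩
    rw [← ENNReal.ofReal_add (by positivity) (by positivity),
      ← ENNReal.ofReal_add (by positivity) (by positivity),
      ← ENNReal.ofReal_add (by positivity) (by positivity), ENNReal.ofReal_div_of_pos (by norm_num),
      ENNReal.ofReal_ofNat, ENNReal.div_eq_inv_mul]
  · simp only [combAdj_iff_of_snd_ne_zero hz, Finset.forall_mem_insert, Finset.mem_singleton,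
      forall_eq] at hu
    obtain ⟨hup, hdown⟩ := hu
    refine ⟨by positivity, ?_⟩
    rw [← ENNReal.ofReal_add (by positivity) (by positivity),
      ENNReal.ofReal_div_of_pos (by norm_num), ENNReal.ofReal_ofNat, ENNReal.div_eq_inv_mul]

/- Since the variance of a step of the walk along a column is `1`, and `1 / 2` on the axis, the
quadratic term has drift at most `-η`. -/
lemma tsum_stepProb_mul_ofReal_add_quadratic_le {η : ℝ} (hη : 0 ≤ η) {K : ℝ} {u : ℤ × ℤ → ℝ}
    {z : ℤ × ℤ} (hu : combMean u z ≤ u z)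
    (hnonneg : ∀ w, combAdj z w → 0 ≤ u w + 2 * η * (K - (w.2 : ℝ) ^ 2)) :
    ∑' w, stepProb z w * ENNReal.ofReal (u w + 2 * η * (K - (w.2 : ℝ) ^ 2)) + ENNReal.ofReal η ≤
      ENNReal.ofReal (u z + 2 * η * (K - (z.2 : ℝ) ^ 2)) := by
  obtain ⟨hmean, htsum⟩ := tsum_stepProb_mul_ofReal hnonneg
  rw [htsum, ← ENNReal.ofReal_add hmean hη]
  refine ENNReal.ofReal_le_ofReal ?_
  unfold combMean at hu ⊢
  split_ifs at hu ⊢ with hz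
  · rw [hz]
    push_cast
    linarith
  · push_cast
    linarith

/-- A harmonic function on the comb: it is `1` to the left of the column `y`, equals
`(1 + growth t n) / 2` at `(y + n, 0)`, and is affine on each half of the column `y + n`. -/
noncomputable def combPotential (t : ℕ → ℝ) (y : ℤ) (z : ℤ × ℤ) : ℝ :=
  if z.1 < y then 1
  else (1 + growth t (z.1 - y).toNat * (1 - |(z.2 : ℝ)| * t (z.1 - y).toNat)) / 2

section Potential

variable {t : ℕ → ℝ} {y : ℤ} {z : ℤ × ℤ}

lemma combPotential_of_lt (hz : z.1 < y) : combPotential t y z = 1 := if_pos hz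

lemma combPotential_add (n : ℕ) (k : ℤ) :
    combPotential t y (y + n, k) = (1 + growth t n * (1 - |(k : ℝ)| * t n)) / 2 := by
  simp [combPotential]

lemma combMean_combPotential_of_snd_eq_zero (t : ℕ → ℝ) (y x : ℤ) :
    combMean (combPotential t y) (x, 0) = combPotential t y (x, 0) := by
  simp only [combMean, if_true]
  rcases lt_or_ge x y with hx | hx
  · have hright : combPotential t y (x + 1, 0) = 1 := by
      rcases (Int.add_one_le_iff.2 hx).lt_or_eq with hlt | rfl
      · exact combPotential_of_lt hlt
      · simpa [growth] using combPotential_add (t := t) (y := x + 1) 0 0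
    have hleft : combPotential t y (x - 1, 0) = 1 := combPotential_of_lt (by lia)
    have hcolumn (k : ℤ) : combPotential t y (x, k) = 1 := combPotential_of_lt hx
    rw [hright, hleft, hcolumn, hcolumn, hcolumn]
    norm_num
  · obtain ⟨n, rfl⟩ := Int.le.dest hx
    cases n with
    | zero =>
      have hright : combPotential t y (y + 1, 0) = 1 + t 0 := by
        rw [show y + 1 = y + (1 : ℕ) by simp, combPotential_add]
        simp only [growth, Int.cast_zero, abs_zero, zero_mul, sub_zero]
        ring
      have hleft : combPotential t y (y + (0 : ℕ) - 1, 0) = 1 := combPotential_of_lt (by simp)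
      rw [hleft, show y + (0 : ℕ) + 1 = y + 1 by simp, hright]
      simp only [combPotential_add, growth]
      push_cast
      simp only [abs_neg, abs_one, abs_zero]
      ring
    | succ n =>
      rw [show y + (n + 1 : ℕ) + 1 = y + (n + 2 : ℕ) by push_cast; ring,
        show y + (n + 1 : ℕ) - 1 = y + n by push_cast; ring]
      simp only [combPotential_add, growth]
      push_cast
      simp only [abs_neg, abs_one, abs_zero]
      ring

lemma abs_add_one_add_abs_sub_one {k : ℤ} (hk : k ≠ 0) : |k + 1| + |k - 1| = 2 * |k| := by
  grind

lemma combMean_combPotential (t : ℕ → ℝ) (y : ℤ) (z : ℤ × ℤ) :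
    combMean (combPotential t y) z = combPotential t y z := by
  obtain ⟨x, k⟩ := z
  rcases eq_or_ne k 0 with rfl | hk
  · exact combMean_combPotential_of_snd_eq_zero t y x
  · simp only [combMean, hk, if_false, combPotential]
    split_ifs
    · norm_num
    · have habs : |((k + 1 : ℤ) : ℝ)| + |((k - 1 : ℤ) : ℝ)| = 2 * |(k : ℝ)| := by
        exact_mod_cast abs_add_one_add_abs_sub_one hk
      linear_combination
        (-growth t (x - y).toNat * t (x - y).toNat / 4) * habs

end Potential

/-! ### The potential adapted to a cluster -/

/-- The coefficients of the potential adapted to the cluster `C`: `1 / v ^ 2` for the columns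
`y, …, y + L - 1` with fewer than `v ^ 2` sites, and `0` for all other columns. -/
noncomputable def toothSlope (C : Finset (ℤ × ℤ)) (y : ℤ) (v L n : ℕ) : ℝ :=
  if L ≤ n ∨ v ^ 2 ≤ columnCount C (y + n) then 0 else 1 / v ^ 2

section Tooth

variable {C : Finset (ℤ × ℤ)} {y : ℤ} {z : ℤ × ℤ} {v e L n N : ℕ}

lemma toothSlope_nonneg (C : Finset (ℤ × ℤ)) (y : ℤ) (v L n : ℕ) : 0 ≤ toothSlope C y v L n := by
  unfold toothSlope
  split_ifs <;> positivity

lemma toothSlope_of_le (hn : L ≤ n) : toothSlope C y v L n = 0 := if_pos (Or.inl hn)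

/- At most `v * e` columns have `v ^ 2` sites or more, so at least half of the `4 * v * e` columns
are short. -/
lemma two_pow_le_growth_toothSlope (hv : 1 ≤ v) (htail : tailCount C y ≤ v ^ 3 * e)
    (hn : 4 * v * e ≤ n) : 2 ^ e ≤ growth (toothSlope C y v (4 * v * e)) n := by
  let tall := (Finset.range (4 * v * e)).filter fun n : ℕ => v ^ 2 ≤ columnCount C (y + n)
  have htall : tall.card ≤ v * e := by
    have hmul : tall.card * v ^ 2 ≤ tailCount C y :=
      card_mul_le_tailCount fun n hn => (Finset.mem_filter.1 hn).2
    refine Nat.le_of_mul_le_mul_right (hmul.trans (htail.trans_eq ?_)) (pow_pos hv 2)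
    ring
  have hv0 : (v : ℝ) ≠ 0 := by positivity
  have hlength : 2 * v * (2 * e) = 4 * v * e := by ring
  have hslope : ∀ n < 2 * v * (2 * e), n ∉ tall →
      1 / (v : ℝ) ^ 2 ≤ toothSlope C y v (4 * v * e) n := fun n hn hshort => by
    rw [hlength] at hn
    have hshort' : ¬ v ^ 2 ≤ columnCount C (y + n) := fun h =>
      hshort (Finset.mem_filter.2 ⟨Finset.mem_range.2 hn, h⟩)
    simp [toothSlope, hn.not_ge, hshort']
  have hgrowth := two_pow_le_growth_mul_two_pow (toothSlope_nonneg C y v (4 * v * e))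
    (c := 1 / (v : ℝ) ^ 2) (by positivity) (by field_simp; rfl) hslope htall
  rw [two_mul e, pow_add] at hgrowth
  refine (le_of_mul_le_mul_right hgrowth (by positivity)).trans ?_
  exact growth_monotone (toothSlope_nonneg C y v (4 * v * e)) (by lia)

lemma abs_mul_toothSlope_le_one {k : ℤ} (hk : k.natAbs ≤ columnCount C (y + n)) :
    |(k : ℝ)| * toothSlope C y v L n ≤ 1 := by
  unfold toothSlope
  split_ifs with h
  · simp
  · have hkv : |(k : ℝ)| ≤ (v : ℝ) ^ 2 := by
      rw [← Int.cast_abs, Int.abs_eq_natAbs]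
      exact_mod_cast hk.trans (not_le.1 (not_or.1 h).2).le
    rw [mul_one_div]
    exact div_le_one_of_le₀ hkv (by positivity)

lemma half_le_combPotential_toothSlope (hz : IsAncestral (insert z C)) :
    1 / 2 ≤ combPotential (toothSlope C y v L) y z := by
  obtain ⟨x, k⟩ := z
  rcases lt_or_ge x y with hx | hx
  · rw [combPotential_of_lt hx]
    norm_num
  · obtain ⟨n, rfl⟩ := Int.le.dest hx
    rw [combPotential_add]
    have hfactor : 0 ≤ 1 - |(k : ℝ)| * toothSlope C y v L n :=
      sub_nonneg.2 (abs_mul_toothSlope_le_one (natAbs_le_columnCount hz))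
    linarith [mul_nonneg (growth_nonneg (toothSlope_nonneg C y v L) n) hfactor]

lemma two_pow_div_two_le_combPotential_toothSlope (hv : 1 ≤ v) (htail : tailCount C y ≤ v ^ 3 * e)
    (hz : y + (4 * v * e : ℕ) ≤ z.1) :
    2 ^ e / 2 ≤ combPotential (toothSlope C y v (4 * v * e)) y z := by
  obtain ⟨x, k⟩ := z
  obtain ⟨n, hn, rfl⟩ : ∃ n : ℕ, 4 * v * e ≤ n ∧ x = y + n :=
    ⟨(x - y).toNat, by dsimp only at hz; lia, by dsimp only at hz; lia⟩
  rw [combPotential_add, toothSlope_of_le hn]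
  linarith [two_pow_le_growth_toothSlope hv htail hn]

lemma zero_le_sq_sub_sq_snd (hz : IsAncestral (insert z C)) (hC : C.card ≤ N) :
    0 ≤ (N : ℝ) ^ 2 - (z.2 : ℝ) ^ 2 := by
  have hk : |(z.2 : ℝ)| ≤ N := by
    rw [← Int.cast_abs, Int.abs_eq_natAbs]
    exact_mod_cast (natAbs_le_columnCount hz).trans ((columnCount_le_card C z.1).trans hC)
  rw [sub_nonneg, ← sq_abs (z.2 : ℝ)]
  gcongr

end Tooth

/-! ### The tilted weight -/

lemma inv_two_eq_ofReal : (2⁻¹ : ℝ≥0∞) = ENNReal.ofReal (1 / 2) := by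
  rw [one_div, ENNReal.ofReal_inv_of_pos two_pos, ENNReal.ofReal_ofNat]

lemma two_pow_mul_inv_two_pow (n : ℕ) : (2 : ℝ≥0∞) ^ n * 2⁻¹ ^ n = 1 := by
  rw [← mul_pow, ENNReal.mul_inv_cancel two_ne_zero ENNReal.ofNat_ne_top, one_pow]

/-- Each site of `C` in the columns `y, y + 1, …` halves the weight and each site in the columns
`y', y' + 1, …` multiplies it by `2 ^ e`. Clusters with more than `M` sites in the columns
`y, y + 1, …` have weight `0`. -/
noncomputable def tiltedWeight (y y' : ℤ) (M e : ℕ) (C : Finset (ℤ × ℤ)) : ℝ≥0∞ :=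
  if tailCount C y ≤ M then 2⁻¹ ^ tailCount C y * (2 ^ e) ^ tailCount C y' else 0

section TiltedWeight

variable {C : Finset (ℤ × ℤ)} {y y' : ℤ} {z : ℤ × ℤ} {v e M M' N T : ℕ}

lemma tiltedWeight_empty (y y' : ℤ) (M e : ℕ) : tiltedWeight y y' M e ∅ = 1 := by
  simp [tiltedWeight, tailCount]

lemma tiltedWeight_insert_le_mul {a : ℝ≥0∞} (hz : z ∉ C) (hleft : z.1 < y → 1 ≤ a)
    (hhalf : 2⁻¹ ≤ a) (hright : y' ≤ z.1 → 2⁻¹ * 2 ^ e ≤ a) (hyy' : y ≤ y') :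
    tiltedWeight y y' M e (insert z C) ≤ tiltedWeight y y' M e C * a := by
  have hmono := tailCount_mono (Finset.subset_insert z C) y
  unfold tiltedWeight
  split_ifs with hinsert hC
  · rw [tailCount_insert hz, tailCount_insert hz]
    set g : ℝ≥0∞ := 2⁻¹ ^ tailCount C y * (2 ^ e) ^ tailCount C y'
    split_ifs with hzy hzy' hzy'
    · calc 2⁻¹ ^ (tailCount C y + 1) * (2 ^ e) ^ (tailCount C y' + 1) = g * (2⁻¹ * 2 ^ e) := by
            ring
        _ ≤ g * a := by
            gcongr
            exact hright hzy'
    · calc 2⁻¹ ^ (tailCount C y + 1) * (2 ^ e) ^ (tailCount C y' + 0) = g * 2⁻¹ := by ring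
        _ ≤ g * a := by gcongr
    · exact absurd (hyy'.trans hzy') hzy
    · exact le_mul_of_one_le_right' (hleft (not_le.1 hzy))
  · exact absurd (hmono.trans hinsert) hC
  · exact zero_le
  · exact zero_le

lemma tiltedWeight_insert_le_mul_combPotential (hz : z ∉ C) (hzC : IsAncestral (insert z C))
    (hv : 1 ≤ v) (htail : tailCount C y ≤ v ^ 3 * e) :
    tiltedWeight y (y + (4 * v * e : ℕ)) M e (insert z C) ≤
      tiltedWeight y (y + (4 * v * e : ℕ)) M e C *
        ENNReal.ofReal (combPotential (toothSlope C y v (4 * v * e)) y z) := by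
  refine tiltedWeight_insert_le_mul hz (fun hlt => ?_) ?_ (fun hle => ?_)
    (le_add_of_nonneg_right (Nat.cast_nonneg _))
  · rw [combPotential_of_lt hlt, ENNReal.ofReal_one]
  · rw [inv_two_eq_ofReal]
    exact ENNReal.ofReal_le_ofReal (half_le_combPotential_toothSlope hzC)
  · rw [inv_two_eq_ofReal, ← ENNReal.ofReal_ofNat 2, ← ENNReal.ofReal_pow zero_le_two,
      ← ENNReal.ofReal_mul (by norm_num)]
    refine ENNReal.ofReal_le_ofReal (le_trans (le_of_eq ?_)
      (two_pow_div_two_le_combPotential_toothSlope hv htail hle))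
    ring

/- The potential is harmonic; the term `2 / T * (N ^ 2 - k ^ 2)` at height `k` makes it lose at
least `1 / T` per step, at the price of the factor `1 + 2 * N ^ 2 / T`. -/
lemma stoppedExp_tiltedWeight_le_of_tailCount_le (hCanc : IsAncestral C) (hCN : C.card ≤ N)
    (hT : 1 ≤ T) (hy : 1 ≤ y) (hv : 1 ≤ v) (htail : tailCount C y ≤ v ^ 3 * e) :
    stoppedExp stepProb C
        (fun z => tiltedWeight y (y + (4 * v * e : ℕ)) M e (insert z C)) T (0, 0) ≤
      ENNReal.ofReal (1 + 2 * N ^ 2 / T) * tiltedWeight y (y + (4 * v * e : ℕ)) M e C := by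
  have hTpos : (0 : ℝ) < T := by exact_mod_cast hT
  let potential := combPotential (toothSlope C y v (4 * v * e)) y
  let u (z : ℤ × ℤ) : ℝ := potential z + 2 * (1 / T) * ((N : ℝ) ^ 2 - (z.2 : ℝ) ^ 2)
  have hpot (z : ℤ × ℤ) (hz : IsAncestral (insert z C)) : potential z ≤ u z :=
    le_add_of_nonneg_right (mul_nonneg (by positivity) (zero_le_sq_sub_sq_snd hz hCN))
  have hu (z : ℤ × ℤ) (hz : IsAncestral (insert z C)) : 0 ≤ u z :=
    (one_half_pos.le.trans (half_le_combPotential_toothSlope hz)).trans (hpot z hz)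
  have hnbr := isGrowthInvariant_isAncestral.insert_step C hCanc
  have hstart : ENNReal.ofReal (u (0, 0)) + (1 - T * ENNReal.ofReal (1 / T)) =
      ENNReal.ofReal (1 + 2 * N ^ 2 / T) := by
    have hone : (T : ℝ≥0∞) * ENNReal.ofReal (1 / T) = 1 := by
      rw [← ENNReal.ofReal_natCast, ← ENNReal.ofReal_mul hTpos.le, mul_one_div_cancel hTpos.ne',
        ENNReal.ofReal_one]
    have hpot0 : potential (0, 0) = 1 := combPotential_of_lt hy
    simp only [u, hone, tsub_self, add_zero, hpot0]
    congr 1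
    push_cast
    ring
  rw [mul_comm (ENNReal.ofReal _), ← hstart]
  refine stoppedExp_le (B := {z | IsAncestral (insert z C)}) (u := fun z => ENNReal.ofReal (u z))
    (fun z _ => (tsum_stepProb z).le) hnbr (fun z hz => ?_)
    (fun z hz => by rw [Finset.insert_eq_of_mem hz]) (fun z hz hzC => ?_) T
    (isGrowthInvariant_isAncestral.insert_origin C hCanc)
  · exact tsum_stepProb_mul_ofReal_add_quadratic_le (by positivity)
      (combMean_combPotential _ y z).le fun w hw => hu w (hnbr z hz w (stepProb_ne_zero_iff.2 hw))
  · refine (tiltedWeight_insert_le_mul_combPotential hzC hz hv htail).trans ?_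
    gcongr
    exact hpot z hz

lemma stoppedExp_tiltedWeight_le (hCanc : IsAncestral C) (hCN : C.card ≤ N) (hT : 1 ≤ T)
    (hy : 1 ≤ y) (hv : 1 ≤ v) (hM : M ≤ v ^ 3 * e) :
    stoppedExp stepProb C
        (fun z => tiltedWeight y (y + (4 * v * e : ℕ)) M e (insert z C)) T (0, 0) ≤
      ENNReal.ofReal (1 + 2 * N ^ 2 / T) * tiltedWeight y (y + (4 * v * e : ℕ)) M e C := by
  rcases le_or_gt (tailCount C y) M with htail | htail
  · exact stoppedExp_tiltedWeight_le_of_tailCount_le hCanc hCN hT hy hv (htail.trans hM)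
  · have hzero (z : ℤ × ℤ) : tiltedWeight y (y + (4 * v * e : ℕ)) M e (insert z C) = 0 :=
      if_neg (htail.trans_le (tailCount_mono (Finset.subset_insert z C) y)).not_ge
    simp only [hzero, stoppedExp_zero]
    exact zero_le

lemma one_le_mul_tiltedWeight (hM : tailCount C y ≤ M) (hM' : M' ≤ tailCount C y') :
    1 ≤ 2 ^ M * 2⁻¹ ^ (e * M') * tiltedWeight y y' M e C := by
  rw [tiltedWeight, if_pos hM, ← pow_mul]
  calc (1 : ℝ≥0∞)
      = (2 ^ tailCount C y * 2⁻¹ ^ tailCount C y) * (2 ^ (e * M') * 2⁻¹ ^ (e * M')) := by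
        rw [two_pow_mul_inv_two_pow, two_pow_mul_inv_two_pow, one_mul]
    _ = (2 ^ tailCount C y * 2⁻¹ ^ (e * M')) * (2⁻¹ ^ tailCount C y * 2 ^ (e * M')) := by ring
    _ ≤ 2 ^ M * 2⁻¹ ^ (e * M') * (2⁻¹ ^ tailCount C y * 2 ^ (e * tailCount C y')) := by
        gcongr
        · exact one_le_two
        · exact one_le_two

lemma clusterExp_indicator_tailJump_le (hT : 1 ≤ T) (hy : 1 ≤ y) (hv : 1 ≤ v)
    (hM : M ≤ v ^ 3 * e) :
    clusterExp stepProb (0, 0) T N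
        ({D | tailCount D y ≤ M ∧ M' ≤ tailCount D (y + (4 * v * e : ℕ))}.indicator 1) ≤
      2 ^ M * 2⁻¹ ^ (e * M') * ENNReal.ofReal (1 + 2 * N ^ 2 / T) ^ N := by
  calc clusterExp stepProb (0, 0) T N
        ({D | tailCount D y ≤ M ∧ M' ≤ tailCount D (y + (4 * v * e : ℕ))}.indicator 1)
      ≤ clusterExp stepProb (0, 0) T N fun D =>
        2 ^ M * 2⁻¹ ^ (e * M') * tiltedWeight y (y + (4 * v * e : ℕ)) M e D :=
        clusterExp_mono isGrowthInvariant_isAncestral fun D _ _ =>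
          Set.indicator_apply_le'
            (fun hD : tailCount D y ≤ M ∧ _ => one_le_mul_tiltedWeight hD.1 hD.2) fun _ => zero_le
    _ = 2 ^ M * 2⁻¹ ^ (e * M') *
        clusterExp stepProb (0, 0) T N (tiltedWeight y (y + (4 * v * e : ℕ)) M e) :=
        clusterExp_const_mul _ T N _
    _ ≤ 2 ^ M * 2⁻¹ ^ (e * M') * (ENNReal.ofReal (1 + 2 * N ^ 2 / T) ^ N *
        tiltedWeight y (y + (4 * v * e : ℕ)) M e ∅) := by
        gcongr
        exact clusterExp_le_pow_mul isGrowthInvariant_isAncestral fun C hC hCN =>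
          stoppedExp_tiltedWeight_le hC hCN.le hT hy hv hM
    _ = _ := by rw [tiltedWeight_empty, mul_one]

end TiltedWeight

section Jump

variable {Ω : Type*} [MeasurableSpace Ω] {P : Measure Ω} {W : ℕ → ℕ → Ω → ℤ × ℤ}

lemma measure_tailJump_le (hW : IsIIDCombWalks P W) {y : ℤ} {v e M : ℕ} (hy : 1 ≤ y) (hv : 1 ≤ v)
    (hM : M ≤ v ^ 3 * e) (M' N : ℕ) :
    P {ω | tailCount (dlaFinset (fun i t => W i t ω) N) y ≤ M ∧
        M' ≤ tailCount (dlaFinset (fun i t => W i t ω) N) (y + (4 * v * e : ℕ))} ≤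
      2 ^ M * 2⁻¹ ^ (e * M') := by
  have hfactor : Tendsto (fun T : ℕ => ENNReal.ofReal (1 + 2 * N ^ 2 / T) ^ N) atTop (𝓝 1) := by
    have hreal : Tendsto (fun T : ℕ => 1 + 2 * (N : ℝ) ^ 2 / T) atTop (𝓝 (1 + 0)) :=
      (tendsto_const_div_atTop_nhds_zero_nat _).const_add 1
    simpa using ENNReal.Tendsto.pow (n := N) (ENNReal.tendsto_ofReal hreal)
  have hbound : Tendsto
      (fun T : ℕ => 2 ^ M * 2⁻¹ ^ (e * M') * ENNReal.ofReal (1 + 2 * N ^ 2 / T) ^ N) atTop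
      (𝓝 (2 ^ M * 2⁻¹ ^ (e * M'))) := by
    simpa using ENNReal.Tendsto.const_mul (a := 2 ^ M * 2⁻¹ ^ (e * M')) hfactor (Or.inl one_ne_zero)
  exact measure_dlaFinset_mem_le hW hbound ((eventually_ge_atTop 1).mono fun T hT =>
    clusterExp_indicator_tailJump_le hT hy hv hM)

lemma measure_not_isAncestral_dlaFinset (hW : IsIIDCombWalks P W) (N : ℕ) :
    P {ω | ¬ IsAncestral (dlaFinset (fun i t => W i t ω) N)} = 0 := by
  have hexp (T : ℕ) :
      clusterExp stepProb (0, 0) T N ({D | ¬ IsAncestral D}.indicator 1) ≤ 0 := by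
    calc _ ≤ clusterExp stepProb (0, 0) T N fun _ => 0 :=
          clusterExp_mono isGrowthInvariant_isAncestral fun D hD _ => by simp [hD]
      _ = 0 := clusterExp_zero T N
  exact le_zero_iff.1
    (measure_dlaFinset_mem_le hW tendsto_const_nhds (Eventually.of_forall hexp))

end Jump

/-! ### Union bound over scales -/

section Scales

variable {Ω : Type*} [MeasurableSpace Ω] {P : Measure Ω} {W : ℕ → ℕ → Ω → ℤ × ℤ}

lemma exists_tailJump {D : Finset (ℤ × ℤ)} {R : ℤ} {K : ℕ} {b : ℕ → ℤ} {M : ℕ → ℕ}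
    (hD : IsAncestral D) (hR : (R, 0) ∈ D) (hb : 0 ≤ b 0) (hM : M 0 ≤ R - b 0)
    (hcard : D.card ≤ M K) :
    ∃ j < K, tailCount D (b (j + 1)) ≤ M (j + 1) ∧ M j ≤ tailCount D (b j) := by
  by_contra! hjump
  have htail : ∀ j ≤ K, M j < tailCount D (b j) := fun j hj => by
    induction j with
    | zero =>
      have := le_tailCount_of_axis_mem hD hR hb
      lia
    | succ j ih =>
      by_contra! hle
      exact (hjump j hj hle).not_gt (ih (Nat.le_of_succ_le hj))
  exact (htail K le_rfl).not_ge ((tailCount_le_card D (b K)).trans hcard)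

lemma measure_axis_mem_dlaFinset_le_sum (hW : IsIIDCombWalks P W) {R : ℤ} {K N : ℕ} {b : ℕ → ℤ}
    {v e M : ℕ → ℕ} (hpos : ∀ j ≤ K, 1 ≤ b j)
    (hb : ∀ j < K, b j = b (j + 1) + (4 * v j * e j : ℕ)) (hv : ∀ j, 1 ≤ v j)
    (hM : ∀ j, M (j + 1) ≤ v j ^ 3 * e j) (hM0 : M 0 ≤ R - b 0) (hN : N ≤ M K) :
    P {ω | (R, 0) ∈ dlaFinset (fun i t => W i t ω) N} ≤
      ∑ j ∈ Finset.range K, 2 ^ M (j + 1) * 2⁻¹ ^ (e j * M j) := by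
  let A (ω : Ω) := dlaFinset (fun i t => W i t ω) N
  let jump (j : ℕ) : Set Ω :=
    {ω | tailCount (A ω) (b (j + 1)) ≤ M (j + 1) ∧ M j ≤ tailCount (A ω) (b j)}
  have hcover : {ω | (R, 0) ∈ A ω} ⊆ {ω | ¬ IsAncestral (A ω)} ∪ ⋃ j ∈ Finset.range K, jump j := by
    intro ω hω
    refine or_iff_not_imp_left.2 fun hanc => ?_
    obtain ⟨j, hj, hjump⟩ := exists_tailJump (not_not.1 hanc) hω
      (zero_le_one.trans (hpos 0 K.zero_le)) hM0 ((card_dlaFinset_le _ N).trans hN)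
    exact Set.mem_biUnion (Finset.mem_coe.2 (Finset.mem_range.2 hj)) hjump
  calc P {ω | (R, 0) ∈ A ω}
      ≤ P {ω | ¬ IsAncestral (A ω)} + P (⋃ j ∈ Finset.range K, jump j) :=
        (measure_mono hcover).trans (measure_union_le _ _)
    _ ≤ 0 + ∑ j ∈ Finset.range K, P (jump j) :=
        add_le_add (measure_not_isAncestral_dlaFinset hW N).le
          (measure_biUnion_finset_le _ _)
    _ ≤ ∑ j ∈ Finset.range K, 2 ^ M (j + 1) * 2⁻¹ ^ (e j * M j) := by
        rw [zero_add]
        refine Finset.sum_le_sum fun j hj => ?_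
        have hj' := Finset.mem_range.1 hj
        simp only [jump, hb j hj']
        exact measure_tailJump_le hW (hpos _ hj') (hv j) (hM j) (M j) N

/-- The threshold on the number of sites beyond the checkpoint `j`: a cluster jumps between the
checkpoints `j + 1` and `j`, of which `j` lies further out, if it has at most `scaleMass l (j + 1)`
sites beyond the former and at least `scaleMass l j` beyond the latter. The parameter `l` is such
that the tentacle has length of order `8 ^ l`. -/
def scaleMass (l j : ℕ) : ℕ := 8 ^ (j + l + 4)

/-- The exponential rate `e` used between the checkpoints `j` and `j + 1`. The subtraction is
truncated: the rate is `17` for `l < j`. -/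
def scaleRate (l j : ℕ) : ℕ := 16 + 8 ^ (l + 1 - j)

/-- The width `v` used between the checkpoints `j` and `j + 1`, small enough for the distances
`4 * v * e` to add up to less than `8 ^ (l + 4)` and large enough for `v ^ 3 * e` to exceed the mass
at scale `j + 1`. -/
def scaleWidth (l j : ℕ) : ℕ := 2 ^ (j + 4 + min j l)

/-- The distance between the checkpoints `0` and `j`. -/
def scaleDepth (l j : ℕ) : ℕ := ∑ i ∈ Finset.range j, 4 * scaleWidth l i * scaleRate l i

lemma scaleMass_succ_le (l j : ℕ) : scaleMass l (j + 1) ≤ scaleWidth l j ^ 3 * scaleRate l j := by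
  have hwidth : scaleWidth l j ^ 3 = 8 ^ (j + 4 + min j l) := by
    rw [scaleWidth, ← pow_mul, mul_comm, pow_mul]
    norm_num
  rw [hwidth, scaleMass, scaleRate]
  rcases le_total l j with hlj | hjl
  · calc 8 ^ (j + 1 + l + 4) = 8 ^ (j + 4 + l) * 8 := by ring
      _ ≤ 8 ^ (j + 4 + min j l) * (16 + 8 ^ (l + 1 - j)) := by
          rw [min_eq_right hlj]
          gcongr
          lia
  · calc 8 ^ (j + 1 + l + 4) = 8 ^ (j + 4 + j) * 8 ^ (l + 1 - j) := by
          rw [← pow_add]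
          congr 1
          lia
      _ ≤ 8 ^ (j + 4 + min j l) * (16 + 8 ^ (l + 1 - j)) := by
          rw [min_eq_left hjl]
          gcongr
          lia

lemma add_scaleMass_succ_le (l j : ℕ) :
    8 ^ (2 * l + 5) + (j + 1) + scaleMass l (j + 1) ≤ scaleRate l j * scaleMass l j := by
  have hexp : 8 ^ (2 * l + 5) ≤ 8 ^ (l + 1 - j) * scaleMass l j := by
    rw [scaleMass, ← pow_add]
    exact Nat.pow_le_pow_right (by norm_num) (by lia)
  have hj : j + 1 ≤ scaleMass l j :=
    (Nat.lt_pow_self (by norm_num)).le.trans' (by lia)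
  have hsucc : scaleMass l (j + 1) = 8 * scaleMass l j := by
    rw [scaleMass, scaleMass]
    ring
  rw [scaleRate, add_mul]
  lia

lemma scaleStep_add_le {l j : ℕ} (hj : j < 2 * l) :
    4 * scaleWidth l j * scaleRate l j ≤ 2 ^ (3 * l + 9 - j) + 68 * 2 ^ (j + l + 4) := by
  have hpow (a b : ℕ) : 4 * 2 ^ a * (16 + 8 ^ b) = 64 * 2 ^ a + 2 ^ (a + 3 * b + 2) := by
    rw [pow_add, pow_add, pow_mul]
    norm_num
    ring
  rw [scaleWidth, scaleRate, hpow]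
  rcases le_or_gt j l with hjl | hlj
  · have hmono : 2 ^ (j + 4 + min j l) ≤ 2 ^ (j + l + 4) :=
      Nat.pow_le_pow_right two_pos (by lia)
    rw [show j + 4 + min j l + 3 * (l + 1 - j) + 2 = 3 * l + 9 - j by lia]
    lia
  · rw [min_eq_right hlj.le, show l + 1 - j = 0 by lia]
    have : 2 ^ (j + 4 + l + 3 * 0 + 2) = 4 * 2 ^ (j + l + 4) := by ring
    have : 2 ^ (j + 4 + l) = 2 ^ (j + l + 4) := by ring
    lia

lemma scaleDepth_add_le {l j : ℕ} (hj : j ≤ 2 * l) :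
    scaleDepth l j + 2 ^ (3 * l + 10 - j) ≤ 2 ^ (3 * l + 10) + 68 * 2 ^ (j + l + 4) := by
  induction j with
  | zero => simp [scaleDepth]
  | succ j ih =>
    have hstep := scaleStep_add_le (show j < 2 * l by lia)
    have hhalf : 2 ^ (3 * l + 10 - j) = 2 * 2 ^ (3 * l + 9 - j) := by
      rw [← pow_succ']
      congr 1
      lia
    have hdouble : 2 ^ (j + 1 + l + 4) = 2 * 2 ^ (j + l + 4) := by ring
    rw [scaleDepth, Finset.sum_range_succ, ← scaleDepth, hdouble,
      show 3 * l + 10 - (j + 1) = 3 * l + 9 - j by lia]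
    have := ih (by lia)
    lia

lemma scaleDepth_lt {l j : ℕ} (hj : j ≤ 2 * l) : scaleDepth l j < 8 ^ (l + 4) := by
  have hdepth := scaleDepth_add_le hj
  have hmono : 2 ^ (j + l + 4) ≤ 2 ^ (3 * l + 4) := Nat.pow_le_pow_right two_pos (by lia)
  have h8 : 8 ^ (l + 4) = 4096 * 2 ^ (3 * l) := by
    rw [pow_mul, pow_add]
    norm_num
    ring
  have hpos : 0 < 2 ^ (3 * l) := by positivity
  lia

lemma measure_axis_mem_dlaFinset_le (hW : IsIIDCombWalks P W) {l N R : ℕ}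
    (hR : 2 * 8 ^ (l + 4) ≤ R) (hN : N ≤ 8 ^ (3 * l + 4)) :
    P {ω | ((R : ℤ), 0) ∈ dlaFinset (fun i t => W i t ω) N} ≤ 2⁻¹ ^ 8 ^ (2 * l + 5) := by
  let checkpoint (j : ℕ) : ℤ := R - (8 ^ (l + 4) : ℕ) - scaleDepth l j
  have hcheck : ∀ j ≤ 2 * l, 1 ≤ checkpoint j := fun j hj => by
    have := scaleDepth_lt hj
    simp only [checkpoint]
    lia
  have hstep : ∀ j < 2 * l,
      checkpoint j = checkpoint (j + 1) + (4 * scaleWidth l j * scaleRate l j : ℕ) := fun j _ => by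
    simp only [checkpoint, scaleDepth, Finset.sum_range_succ]
    push_cast
    ring
  have hunion := measure_axis_mem_dlaFinset_le_sum hW (R := R) hcheck hstep
    (fun j => Nat.one_le_two_pow) (scaleMass_succ_le l)
    (by simp [checkpoint, scaleMass, scaleDepth])
    (hN.trans_eq (by rw [scaleMass]; congr 1; ring))
  calc P {ω | ((R : ℤ), 0) ∈ dlaFinset (fun i t => W i t ω) N}
      ≤ ∑ j ∈ Finset.range (2 * l), 2 ^ scaleMass l (j + 1) *
          2⁻¹ ^ (8 ^ (2 * l + 5) + (j + 1) + scaleMass l (j + 1)) := by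
        refine hunion.trans (Finset.sum_le_sum fun j _ => ?_)
        gcongr 2 ^ _ * ?_
        exact pow_le_pow_right_of_le_one' (by simp) (add_scaleMass_succ_le l j)
    _ = 2⁻¹ ^ 8 ^ (2 * l + 5) * ∑ j ∈ Finset.range (2 * l), 2⁻¹ ^ (j + 1) := by
        rw [Finset.mul_sum]
        refine Finset.sum_congr rfl fun j _ => ?_
        rw [pow_add, pow_add _ _ (j + 1), mul_left_comm, two_pow_mul_inv_two_pow, mul_one]
    _ ≤ 2⁻¹ ^ 8 ^ (2 * l + 5) * ∑' j, 2⁻¹ ^ (j + 1) := by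
        gcongr
        exact ENNReal.sum_le_tsum _
    _ = 2⁻¹ ^ 8 ^ (2 * l + 5) := by
        rw [ENNReal.tsum_geometric_add_one, ENNReal.one_sub_inv_two, inv_inv,
          ENNReal.inv_mul_cancel two_ne_zero ENNReal.ofNat_ne_top, mul_one]

end Scales

lemma exists_scale {R N : ℕ} (hN : N ≠ 0) (hNR : N * 8 ^ 13 < R ^ 3) :
    ∃ l, 2 * 8 ^ (l + 4) ≤ R ∧ N ≤ 8 ^ (3 * l + 4) ∧ R ^ 2 ≤ 2 ^ 17 * 8 ^ (2 * l + 5) := by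
  have hlarge : 2 * 8 ^ 4 ≤ R := by
    refine (lt_of_pow_lt_pow_left₀ 3 R.zero_le (lt_of_le_of_lt ?_ hNR)).le
    calc (2 * 8 ^ 4) ^ 3 = 1 * 8 ^ 13 := by norm_num
      _ ≤ N * 8 ^ 13 := by gcongr; exact Nat.one_le_iff_ne_zero.2 hN
  obtain ⟨l, hl⟩ : ∃ l, Nat.log 8 (R / 2) = l + 4 :=
    Nat.exists_eq_add_of_le' (Nat.le_log_of_pow_le (by norm_num) (by lia))
  have hlow : 8 ^ (l + 4) ≤ R / 2 := hl ▸ Nat.pow_log_le_self 8 (by lia)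
  have hhigh : R ≤ 2 * 8 ^ (l + 5) := by
    have : R / 2 < 8 ^ (l + 5) := by
      simpa [hl] using Nat.lt_pow_succ_log_self (b := 8) (by norm_num) (R / 2)
    lia
  refine ⟨l, by lia, ?_, ?_⟩
  · refine Nat.le_of_mul_le_mul_right (hNR.le.trans ?_) (show 0 < 8 ^ 13 by norm_num)
    calc R ^ 3 ≤ (2 * 8 ^ (l + 5)) ^ 3 := by gcongr
      _ = 8 ^ (3 * l + 16) := by ring
      _ ≤ 8 ^ (3 * l + 4) * 8 ^ 13 := by
          rw [← pow_add]
          exact Nat.pow_le_pow_right (by norm_num) (by lia)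
  · calc R ^ 2 ≤ (2 * 8 ^ (l + 5)) ^ 2 := by gcongr
      _ = 2 ^ 17 * 8 ^ (2 * l + 5) := by ring

lemma inv_two_pow_le_ofReal_exp_neg {n : ℕ} {x : ℝ} (hx : x ≤ n / 2) :
    (2⁻¹ : ℝ≥0∞) ^ n ≤ ENNReal.ofReal (Real.exp (-x)) := by
  rw [inv_two_eq_ofReal, ← ENNReal.ofReal_pow one_half_pos.le]
  refine ENNReal.ofReal_le_ofReal ?_
  have hhalf : (1 / 2 : ℝ) ≤ Real.exp (-(1 / 2)) := by
    linarith [Real.add_one_le_exp (-(1 / 2) : ℝ)]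
  calc (1 / 2 : ℝ) ^ n ≤ Real.exp (-(1 / 2)) ^ n := by gcongr
    _ = Real.exp (-(n / 2)) := by
        rw [← Real.exp_nat_mul]
        ring_nf
    _ ≤ Real.exp (-x) := by gcongr

end CombIDLA

open CombIDLA in
theorem comb_idla_tentacle_bound_general :
    ∃ β κ₂ : ℝ, 0 < β ∧ 0 < κ₂ ∧
      ∀ R N : ℕ, (N : ℝ) < β * (R : ℝ) ^ 3 →
        ∀ (Ω : Type*) [MeasurableSpace Ω] (P : Measure Ω) (W : ℕ → ℕ → Ω → ℤ × ℤ),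
          IsIIDCombWalks P W →
          P {ω | (((R : ℤ), (0 : ℤ)) : ℤ × ℤ) ∈ dlaCluster (fun i t => W i t ω) N} ≤
            ENNReal.ofReal (Real.exp (-κ₂ * (R : ℝ) ^ 2)) := by
  refine ⟨1 / 8 ^ 13, 1 / 2 ^ 18, by positivity, by positivity, fun R N hN Ω _ P W hW => ?_⟩
  rcases eq_or_ne N 0 with rfl | hN0
  · simp [dlaCluster]
  have hNR : N * 8 ^ 13 < R ^ 3 := by
    rw [one_div_mul_eq_div, lt_div_iff₀ (by positivity)] at hN
    exact_mod_cast hN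
  obtain ⟨l, hRl, hNl, hR2⟩ := exists_scale hN0 hNR
  have hexponent : 1 / 2 ^ 18 * (R : ℝ) ^ 2 ≤ (8 ^ (2 * l + 5) : ℕ) / 2 := by
    have : (R : ℝ) ^ 2 ≤ 2 ^ 17 * (8 ^ (2 * l + 5) : ℕ) := by exact_mod_cast hR2
    linarith
  simp only [← coe_dlaFinset, Finset.mem_coe, neg_mul]
  exact (measure_axis_mem_dlaFinset_le hW hRl hNl).trans (inv_two_pow_le_ofReal_exp_neg hexponent)

/-- **Corollary (large deviations for thin tentacles along the x-axis).**
There are `β, κ₂ > 0` such that if `d(n) < β R³` then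
`P((R,0) ∈ A(n)) ≤ exp(−κ₂ R²)`. -/
theorem comb_idla_tentacle_bound :
    ∃ β κ₂ : ℝ, 0 < β ∧ 0 < κ₂ ∧
      ∀ R n : ℕ, (((combD n).ncard : ℝ) < β * (R : ℝ) ^ 3) →
        ∀ (Ω : Type*) [MeasurableSpace Ω] (P : Measure Ω) (W : ℕ → ℕ → Ω → ℤ × ℤ),
          IsIIDCombWalks P W →
          P {ω | (((R : ℤ), (0 : ℤ)) : ℤ × ℤ) ∈
              dlaCluster (fun i t => W i t ω) ((combD n).ncard)} ≤
            ENNReal.ofReal (Real.exp (-κ₂ * (R : ℝ) ^ 2)) := by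
  obtain ⟨β, κ₂, hβ, hκ₂, h⟩ := comb_idla_tentacle_bound_general
  exact ⟨β, κ₂, hβ, hκ₂, fun R n => h R (combD n).ncard⟩
end
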